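/- Let V ⊆ ℂ^n be a d-dimensional algebraic set and τ > 0 a real number. Let S be a finite subset of ℂ^n with |S| ≥ τ·δ(V)^d·deg(V). Then there exists a polynomial P ∈ ℂ[x_1,…,x_n] of degree at most C(n,τ)·(|S|/deg(V))^{1/d}, for a constant C(n,τ) depending only on n and τ, vanishing at every point of S but not vanishing identically on V (i.e., not vanishing on at least one irreducible component of V). -/

import Mathlib

open MvPolynomial Set

noncomputable section

namespace Paper

variable (n : ℕ)

/-- The zero locus in `ℂⁿ` of a set of polynomials. -/
def zeroLocus (I : Set (MvPolynomial (Fin n) ℂ)) : Set (Fin n → ℂ) :=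
  {x | ∀ f ∈ I, eval x f = 0}

/-- A subset of `ℂⁿ` is algebraic if it is the zero locus of a set of polynomials. -/
def IsAlgebraicSet (V : Set (Fin n → ℂ)) : Prop :=
  ∃ I : Set (MvPolynomial (Fin n) ℂ), V = zeroLocus n I

/-- An irreducible (affine) variety in `ℂⁿ`: a nonempty algebraic set that is not covered
by two algebraic sets unless it is contained in one of them. -/
def IsIrredVariety (V : Set (Fin n → ℂ)) : Prop :=
  IsAlgebraicSet n V ∧ V.Nonempty ∧
    ∀ V₁ V₂ : Set (Fin n → ℂ), IsAlgebraicSet n V₁ → IsAlgebraicSet n V₂ →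
      V ⊆ V₁ ∪ V₂ → V ⊆ V₁ ∨ V ⊆ V₂

/-- There is a strictly increasing chain of `d + 1` irreducible varieties inside `V`. -/
def HasChain (V : Set (Fin n → ℂ)) (d : ℕ) : Prop :=
  ∃ W : Fin (d + 1) → Set (Fin n → ℂ),
    (∀ i, IsIrredVariety n (W i)) ∧ (∀ i j : Fin (d + 1), i < j → W i ⊂ W j) ∧
      W (Fin.last d) ⊆ V

/-- The (Krull) dimension of a subset of `ℂⁿ`, as the length of the longest chain of
irreducible subvarieties. -/
def dim (V : Set (Fin n → ℂ)) : ℕ := sSup {d | HasChain n V d}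

/-- `W` is an irreducible component of `X`: an irreducible subvariety that is maximal among
irreducible subvarieties of `X`. -/
def IsIrredComponent (W X : Set (Fin n → ℂ)) : Prop :=
  IsIrredVariety n W ∧ W ⊆ X ∧
    ∀ W', IsIrredVariety n W' → W ⊆ W' → W' ⊆ X → W' = W

/-- The degree of an irreducible variety `V ⊆ ℂⁿ` of dimension `d` (i.e. the degree of its
projective closure): the largest finite number of points in which an affine-linear subspace of
dimension `n - d` meets `V`. -/
def degree (V : Set (Fin n → ℂ)) : ℕ :=
  sSup { m | ∃ L : AffineSubspace ℂ (Fin n → ℂ),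
    Module.finrank ℂ L.direction = n - dim n V ∧ (V ∩ ↑L).Finite ∧ (V ∩ ↑L).ncard = m }

/-- The degree of an algebraic set: the sum of the degrees of its irreducible components. -/
def degreeSum (X : Set (Fin n → ℂ)) : ℕ :=
  ∑ᶠ W ∈ {W | IsIrredComponent n W X}, degree n W

/-- The maximal dimension of an irreducible component of `X` containing `V` equals `e`. -/
def MaxCompDimEq (X V : Set (Fin n → ℂ)) (e : ℕ) : Prop :=
  (∃ W, IsIrredComponent n W X ∧ V ⊆ W ∧ dim n W = e) ∧
    ∀ W, IsIrredComponent n W X → V ⊆ W → dim n W ≤ e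

/-- The partial degrees `δ_i(V)` of an irreducible variety `V`:  the minimal `δ` such that there
are polynomials of degree at most `δ` cutting out an algebraic set containing `V` whose
irreducible components containing `V` have maximal dimension `n - i`.  By convention
`δ_0(V) = 0`. -/
def partialDeg (V : Set (Fin n → ℂ)) (i : ℕ) : ℕ :=
  if i = 0 then 0
  else sInf { δ | ∃ I : Finset (MvPolynomial (Fin n) ℂ),
    (∀ f ∈ I, f.totalDegree ≤ δ) ∧ V ⊆ zeroLocus n ↑I ∧
      MaxCompDimEq n (zeroLocus n ↑I) V (n - i) }

/-- The partial degrees as extended naturals, with the convention `δ_i(V) = ∞` for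
`i > n - dim V`. -/
def partialDegE (V : Set (Fin n → ℂ)) (i : ℕ) : ℕ∞ :=
  if i ≤ n - dim n V then (partialDeg n V i : ℕ∞) else ⊤

/-- `δ(V)` for an irreducible variety `V`: the minimal `δ` such that `V` is an irreducible
component of the zero set of a finite family of polynomials of degree at most `δ`. -/
def deltaIrr (V : Set (Fin n → ℂ)) : ℕ :=
  sInf { δ | ∃ I : Finset (MvPolynomial (Fin n) ℂ),
    (∀ f ∈ I, f.totalDegree ≤ δ) ∧ IsIrredComponent n V (zeroLocus n ↑I) }

/-- `δ(V)` for a general algebraic set `V`: the minimal `δ` such that every irreducible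
component of `V` is an irreducible component of the zero set of a finite family of polynomials
of degree at most `δ`. -/
def deltaSet (V : Set (Fin n → ℂ)) : ℕ :=
  sInf { δ | ∃ I : Finset (MvPolynomial (Fin n) ℂ),
    (∀ f ∈ I, f.totalDegree ≤ δ) ∧
      ∀ W, IsIrredComponent n W V → IsIrredComponent n W (zeroLocus n ↑I) }

/-- An algebraic set all of whose irreducible components have dimension `d`. -/
def IsAlgSetOfDim (V : Set (Fin n → ℂ)) (d : ℕ) : Prop :=
  IsAlgebraicSet n V ∧ V.Nonempty ∧ ∀ W, IsIrredComponent n W V → dim n W = d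

/-- `Δ_i(V) = max (deg V / (δ_{i+1}(V) ⋯ δ_{n-d}(V))) 1`. -/
def Delta (V : Set (Fin n → ℂ)) (i : ℕ) : ℝ :=
  max ((degree n V : ℝ) / ∏ j ∈ Finset.Icc (i + 1) (n - dim n V), (partialDeg n V j : ℝ)) 1

/-- `i` is admissible with respect to `V` if `δ_{i+1}(V) > 2 i δ_i(V)` (with the convention
`δ_i(V) = ∞` for `i > n - dim V`). -/
def Admissible (V : Set (Fin n → ℂ)) (i : ℕ) : Prop :=
  ((2 * i : ℕ) : ℕ∞) * partialDegE n V i < partialDegE n V (i + 1)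

/-- The interval `ℛ_i(V) = [c₁ δ_i(V)^{n-i} Δ_i(V), (c₀/2) δ_{i+1}(V)^{n-i} Δ_i(V)]`,
where `δ_{n-d+1}(V) = ∞` makes the last interval a half-line. -/
def RSet (c0 c1 : ℝ) (V : Set (Fin n → ℂ)) (i : ℕ) : Set ℝ :=
  if i = n - dim n V then
    Set.Ici (c1 * (partialDeg n V i : ℝ) ^ (n - i) * Delta n V i)
  else
    Set.Icc (c1 * (partialDeg n V i : ℝ) ^ (n - i) * Delta n V i)
      ((c0 / 2) * (partialDeg n V (i + 1) : ℝ) ^ (n - i) * Delta n V i)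

/-- The interval `ℛ^l_{s,τ}(V) = [τ δ_s(V)^{n-(s+l)} Δ_s(V), τ δ_{s+1}(V)^{n-(s+l)} Δ_s(V)]`,
where `δ_{n-d+1}(V) = ∞` makes the last interval a half-line. -/
def RlSet (τ : ℝ) (l : ℕ) (V : Set (Fin n → ℂ)) (s : ℕ) : Set ℝ :=
  if s = n - dim n V then
    Set.Ici (τ * (partialDeg n V s : ℝ) ^ (n - (s + l)) * Delta n V s)
  else
    Set.Icc (τ * (partialDeg n V s : ℝ) ^ (n - (s + l)) * Delta n V s)
      (τ * (partialDeg n V (s + 1) : ℝ) ^ (n - (s + l)) * Delta n V s)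

/-- The ideal `I(V)` of polynomials vanishing on `V ⊆ ℂⁿ`. -/
def vanishingIdeal (V : Set (Fin n → ℂ)) : Ideal (MvPolynomial (Fin n) ℂ) where
  carrier := {f | ∀ x ∈ V, eval x f = 0}
  add_mem' := by
    intro a b ha hb x hx
    simp [ha x hx, hb x hx]
  zero_mem' := by
    intro x hx
    simp
  smul_mem' := by
    intro c f hf x hx
    simp [smul_eq_mul, hf x hx]

/-- The ideal `I_ℝ(V)` of real polynomials vanishing on `V ⊆ ℂⁿ`. -/
def vanishingIdealR (V : Set (Fin n → ℂ)) : Ideal (MvPolynomial (Fin n) ℝ) :=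
  (vanishingIdeal n V).comap (MvPolynomial.map (algebraMap ℝ ℂ))

/-- The affine Hilbert function `H_{I(V)}(m) = dim_ℂ ℂ[x]_{≤ m} / I(V)_{≤ m}`, realised as the
dimension of the image of the space of polynomials of total degree at most `m` in the quotient
ring `ℂ[x]/I(V)`. -/
def hilbert (V : Set (Fin n → ℂ)) (m : ℕ) : ℕ :=
  Module.finrank ℂ
    (Submodule.map (Ideal.Quotient.mkₐ ℂ (vanishingIdeal n V)).toLinearMap
      (restrictTotalDegree (Fin n) ℂ m))

/-- The real affine Hilbert function `H_{I(V),ℝ}(m) = dim_ℝ ℝ[x]_{≤ m} / I_ℝ(V)_{≤ m}`. -/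
def hilbertR (V : Set (Fin n → ℂ)) (m : ℕ) : ℕ :=
  Module.finrank ℝ
    (Submodule.map (Ideal.Quotient.mkₐ ℝ (vanishingIdealR n V)).toLinearMap
      (restrictTotalDegree (Fin n) ℝ m))

/-- The inclusion `ℝⁿ → ℂⁿ`. -/
def toC (x : Fin n → ℝ) : Fin n → ℂ := fun i => (x i : ℂ)

/-- The set of real points of `V ⊆ ℂⁿ`. -/
def realPts (V : Set (Fin n → ℂ)) : Set (Fin n → ℝ) := {x | toC n x ∈ V}

/-- The real zero set of a real polynomial. -/
def zeroSetR (g : MvPolynomial (Fin n) ℝ) : Set (Fin n → ℝ) := {x | eval x g = 0}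

/-- The zero locus of the polynomials `P 1, …, P i` (the first `i` members of a tuple of
polynomials indexed from `1`). -/
def zeroLocusUpTo (P : ℕ → MvPolynomial (Fin n) ℂ) (i : ℕ) : Set (Fin n → ℂ) :=
  zeroLocus n {f | ∃ j : ℕ, 1 ≤ j ∧ j ≤ i ∧ f = P j}

/-- `V'` is an `(n-s)`-minimal variety of the irreducible variety `V`. -/
def IsMinimalVariety (V V' : Set (Fin n → ℂ)) (s : ℕ) : Prop :=
  IsIrredVariety n V' ∧ V ⊆ V' ∧ dim n V' = n - s ∧
    ∀ f ∈ vanishingIdeal n V, f ∉ vanishingIdeal n V' →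
      partialDegE n V (s + 1) ≤ (f.totalDegree : ℕ∞)

/-- `S` is `(k,b)`-free with respect to `T`, for the incidence relation `R`. -/
def KBFree {α β : Type*} (R : α → β → Prop) (S : Finset α) (T : Finset β) (k b : ℕ) : Prop :=
  ¬ ∃ (P : Finset α) (B : Finset β), P ⊆ S ∧ B ⊆ T ∧ P.card = k ∧ B.card = b ∧
      ∀ s ∈ P, ∀ t ∈ B, R s t

/-- The number of incidences between a finite set of points and a finite family of sets. -/
def incCountAbs {α : Type*} (S : Finset α) (T : Finset (Set α)) : ℕ :=
  ∑ t ∈ T, (↑S ∩ t).ncard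

/-- The number of incidences between a finite set of real points and a finite family of
subsets of `ℂⁿ`. -/
def incCount (S : Finset (Fin n → ℝ)) (T : Finset (Set (Fin n → ℂ))) : ℕ :=
  ∑ t ∈ T, (↑S ∩ toC n ⁻¹' t).ncard

/-- The total degree `deg T = ∑_{t ∈ T} deg t` of a finite family of algebraic sets. -/
def degFamily (T : Finset (Set (Fin n → ℂ))) : ℕ := ∑ t ∈ T, degreeSum n t

/-- The total degree of a finite family of irreducible varieties. -/
def degFamilyIrred (T : Finset (Set (Fin n → ℂ))) : ℕ := ∑ t ∈ T, degree n t

/-- `α_k(d)`. -/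
def alpha (k d : ℕ) : ℝ :=
  if k = 1 ∧ d = 1 then 0 else (k : ℝ) * ((d : ℝ) - 1) / ((d : ℝ) * (k : ℝ) - 1)

/-- `β_k(d)`. -/
def beta (k d : ℕ) : ℝ :=
  if k = 1 ∧ d = 1 then 1 else (d : ℝ) * ((k : ℝ) - 1) / ((d : ℝ) * (k : ℝ) - 1)

/-- `τ_d(b,k) = b^{1-β_k(d)} k^{1-α_k(d)}`. -/
def tauC (d b k : ℕ) : ℝ := (b : ℝ) ^ (1 - beta k d) * (k : ℝ) ^ (1 - alpha k d)

/-- The Chardin–Philippon property of the constant `c₀`: for every pure-dimensional algebraic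
set `W ⊆ ℂⁿ` and every `m ≥ 2 (n - dim W) δ(W)` one has `H_{I(W)}(m) ≥ c₀ m^{dim W} deg W`. -/
def ChardinPhilippon (c0 : ℝ) : Prop :=
  ∀ (W : Set (Fin n → ℂ)) (e : ℕ), IsAlgSetOfDim n W e →
    ∀ m : ℕ, 2 * (n - e) * deltaSet n W ≤ m →
      c0 * (m : ℝ) ^ e * (degreeSum n W : ℝ) ≤ (hilbert n W m : ℝ)

/-- The defining property of the constant `c₁`: for every irreducible variety `V`, every
positive integer lies in some interval `ℛ_i(V)` with `i` admissible with respect to `V`. -/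
def CoversPositiveIntegers (c0 c1 : ℝ) : Prop :=
  ∀ V : Set (Fin n → ℂ), IsIrredVariety n V →
    ∀ m : ℕ, 0 < m → ∃ i, Admissible n V i ∧ (m : ℝ) ∈ RSet n c0 c1 V i

/-- `i_V(M)`: the smallest admissible `i` such that `M^{n-i} Δ_i(V) ∈ ℛ_i(V)`. -/
def iV (c0 c1 : ℝ) (V : Set (Fin n → ℂ)) (M : ℕ) : ℕ :=
  sInf {i | Admissible n V i ∧ (M : ℝ) ^ (n - i) * Delta n V i ∈ RSet n c0 c1 V i}

/-- A real polynomial bisects a finite set `S ⊆ ℝⁿ` if it is positive on at most half of `S`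
and negative on at most half of `S`. -/
def Bisects (g : MvPolynomial (Fin n) ℝ) (S : Finset (Fin n → ℝ)) : Prop :=
  ((↑S ∩ {x | 0 < eval x g}).ncard : ℝ) ≤ (S.card : ℝ) / 2 ∧
    ((↑S ∩ {x | eval x g < 0}).ncard : ℝ) ≤ (S.card : ℝ) / 2

/-- The set of `r`-rich points of a family `T`: points lying in at least `r` members of `T`. -/
def richPts (T : Finset (Set (Fin n → ℂ))) (r : ℕ) : Set (Fin n → ℂ) :=
  {x | r ≤ ({t | t ∈ T ∧ x ∈ t} : Set (Set (Fin n → ℂ))).ncard}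

/-- A real hypersurface of degree at most `D`: the real zero set of a nonzero real polynomial
of degree at most `D`. -/
def IsRealHypersurfaceDegLE (t : Set (Fin n → ℝ)) (D : ℕ) : Prop :=
  ∃ p : MvPolynomial (Fin n) ℝ, p ≠ 0 ∧ t = zeroSetR n p ∧ p.totalDegree ≤ D

/-- Lexicographic comparison of the tuples `(f 1, …, f m)` and `(g 1, …, g m)`. -/
def LexLE (m : ℕ) (f g : ℕ → ℕ) : Prop :=
  (∀ j ∈ Finset.Icc 1 m, f j = g j) ∨
    ∃ i ∈ Finset.Icc 1 m, (∀ j, 1 ≤ j → j < i → f j = g j) ∧ f i < g i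

/-!
Cut `V` by `d` very general affine forms `y`. Over the algebraic closure `Ω` of `ℂ(X₁, …, X_d)`,
the generic fibre `y = X` of `V` contains `D = deg V` distinct points, each of them an isolated
solution of equations of degree at most `δ = max (δ(V)) 1`. Let `Δ(x, z)` be the Bezoutian
determinant of `n` general combinations of these equations. In the local ring at an isolated
solution `p`, the polynomial `Δ(x, p)` survives by Wiebe's theorem, whereas `Δ(x, q)` dies for
every other solution `q`. A functional of the `x`-variables telling the two apart turns `Δ` into a
polynomial in `z` of degree at most `n(δ - 1) ≤ n δ(V)` which is `1` at `p` and `0` at all such `q`.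

Consequently there are `D` polynomials over `ℂ` of degree at most `n δ(V)` whose values on the `D`
points are independent over `Ω`. Their products with the monomials in the affine forms of
exponents at most `M` are independent over `ℂ` on `V`, so the Hilbert function of `V` at
`n δ(V) + d M` is at least `D (M + 1) ^ d`. For `M = ⌊(|S| / D) ^ (1 / d)⌋` this exceeds `|S|`, and
linear algebra gives a polynomial that vanishes on `S` but not on `V`.
-/

section Wiebe

lemma exists_mul_pow_mem_of_mem_minimalPrimes {R : Type*} [CommRing R] {I p : Ideal R}
    (hp : p ∈ I.minimalPrimes) {x : R} (hx : x ∈ p) : ∃ s N, s ∉ p ∧ s * x ^ N ∈ I := by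
  have hprime : p.IsPrime := hp.isPrime
  by_contra! h
  have hdisj : Disjoint (I : Set R) (p.primeCompl ⊔ Submonoid.powers x : Submonoid R) := by
    rw [Set.disjoint_left]
    intro y hy hyS
    obtain ⟨s, hs, _, ⟨N, rfl⟩, rfl⟩ := Submonoid.mem_sup.1 hyS
    exact h s N hs hy
  obtain ⟨q, hq, hIq, hqdisj⟩ := Ideal.exists_le_prime_disjoint I _ hdisj
  rw [Set.disjoint_left] at hqdisj
  have hqp : q ≤ p := fun y hy => by_contra fun hyp => hqdisj hy (Submonoid.mem_sup_left hyp)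
  exact hqdisj (hp.2 ⟨hq, hIq⟩ hqp hx) (Submonoid.mem_sup_right (Submonoid.mem_powers x))

variable {k : Type*} [CommRing k] {ι : Type*}

lemma mem_span_image_X_pow {N : ℕ} {s : Set ι} {g : MvPolynomial ι k} :
    g ∈ Ideal.span ((fun i => (X i : MvPolynomial ι k) ^ N) '' s) ↔
      ∀ a ∈ g.support, ∃ i ∈ s, N ≤ a i := by
  simpa only [Set.image_image, Set.exists_mem_image, Finsupp.single_le_iff, X_pow_eq_monomial]
    using mem_ideal_span_monomial_image (x := g) (s := (fun i => Finsupp.single i N) '' s)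

lemma mem_span_image_X_pow_compl_of_X_mul_mem {N : ℕ} {j : ι} {g : MvPolynomial ι k}
    (h : X j * g ∈ Ideal.span ((fun i => (X i : MvPolynomial ι k) ^ N) '' {j}ᶜ)) :
    g ∈ Ideal.span ((fun i => (X i : MvPolynomial ι k) ^ N) '' {j}ᶜ) := by
  classical
  rw [mem_span_image_X_pow] at h ⊢
  intro a ha
  obtain ⟨i, hij, hi⟩ := h (Finsupp.single j 1 + a) (by
    rwa [mem_support_iff, coeff_X_mul, ← mem_support_iff])
  refine ⟨i, hij, ?_⟩
  rwa [Finsupp.add_apply, Finsupp.single_eq_of_ne (by simpa using hij), zero_add] at hi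

/-- The translation `f ↦ f(x + p)`, moving the point `p` to the origin. -/
def translate (p : ι → k) : MvPolynomial ι k →ₐ[k] MvPolynomial ι k :=
  aeval fun i => X i + C (p i)

lemma constantCoeff_translate (p : ι → k) (f : MvPolynomial ι k) :
    constantCoeff (translate p f) = eval p f := by
  have h : constantCoeff.comp (translate p : MvPolynomial ι k →+* MvPolynomial ι k) = eval p :=
    MvPolynomial.ringHom_ext (by simp [translate]) (by simp [translate])
  exact congrArg (fun φ => φ f) h

lemma exists_mul_X_sub_C_pow_mem [Finite ι] {F : Type*} [Field F] {I : Ideal (MvPolynomial ι F)}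
    {p : ι → F} (hp : RingHom.ker (eval p) ∈ I.minimalPrimes) :
    ∃ s N, eval p s ≠ 0 ∧ ∀ i, s * (X i - C (p i)) ^ N ∈ I := by
  have := Fintype.ofFinite ι
  have hX (i : ι) : X i - C (p i) ∈ RingHom.ker (eval p) := by simp [RingHom.mem_ker]
  choose s N hs hsN using fun i => exists_mul_pow_mem_of_mem_minimalPrimes hp (hX i)
  refine ⟨∏ i, s i, ∑ i, N i, ?_, fun i => Ideal.mem_of_dvd _ ?_ (hsN i)⟩
  · rw [map_prod]
    exact Finset.prod_ne_zero_iff.2 fun i _ => hs i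
  · exact mul_dvd_mul (Finset.dvd_prod_of_mem s (Finset.mem_univ i))
      (pow_dvd_pow _ (Finset.single_le_sum (fun _ _ => Nat.zero_le _) (Finset.mem_univ i)))

variable [Fintype ι]

lemma mul_prod_X_pow_notMem_span_X_pow {N : ℕ} {g : MvPolynomial ι k}
    (hg : constantCoeff g ≠ 0) :
    g * ∏ i, (X i : MvPolynomial ι k) ^ N ∉
      Ideal.span (Set.range fun i => (X i : MvPolynomial ι k) ^ (N + 1)) := by
  classical
  have hprod : ∏ i, (X i : MvPolynomial ι k) ^ N = monomial (∑ i, Finsupp.single i N) 1 := by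
    simp [X_pow_eq_monomial, monomial_sum_one]
  rw [← Set.image_univ, mem_span_image_X_pow, hprod]
  intro h
  obtain ⟨i, -, hi⟩ := h (∑ i, Finsupp.single i N) (by
    have hcoeff := coeff_mul_monomial 0 (∑ i, Finsupp.single i N) (1 : k) g
    rw [zero_add, mul_one] at hcoeff
    rwa [mem_support_iff, hcoeff])
  simp [Finsupp.finsetSum_apply, Finsupp.single_apply] at hi

variable [DecidableEq ι]

lemma det_mul_mem_of_mulVec_mem {R : Type*} [CommRing R] (M : Matrix ι ι R) (u : ι → R)
    {I : Ideal R} (h : ∀ i, M.mulVec u i ∈ I) (j : ι) : M.det * u j ∈ I := by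
  have hadj : M.adjugate.mulVec (M.mulVec u) j = M.det * u j := by
    rw [Matrix.mulVec_mulVec, Matrix.adjugate_mul, Matrix.smul_mulVec, Matrix.one_mulVec,
      Pi.smul_apply, smul_eq_mul]
  rw [← hadj]
  exact Ideal.sum_mem _ fun i _ => I.mul_mem_left _ (h i)

lemma det_mul_mem_of_mem_span_range {R : Type*} [CommRing R] (M : Matrix ι ι R) (u : ι → R)
    {I : Ideal R} (h : ∀ i, M.mulVec u i ∈ I) {g : R} (hg : g ∈ Ideal.span (Set.range u)) :
    M.det * g ∈ I := by
  have hle : Ideal.span (Set.range u) ≤ I.colon {M.det} := by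
    rw [Ideal.span_le]
    rintro _ ⟨j, rfl⟩
    rw [SetLike.mem_coe, Submodule.mem_colon_singleton, smul_eq_mul, mul_comm]
    exact det_mul_mem_of_mulVec_mem M u h j
  rw [mul_comm, ← smul_eq_mul, ← Submodule.mem_colon_singleton]
  exact hle hg

/- A row orthogonal to `X` makes the determinant vanish modulo the other powers: Cramer's rule
gives this up to the factor `X j`, which is a nonzerodivisor modulo `X i ^ N`, `i ≠ j`. -/
lemma det_updateRow_mem_span_X_pow {N : ℕ} (M : Matrix ι ι (MvPolynomial ι k)) (j : ι)
    (r : ι → MvPolynomial ι k) (hr : r ⬝ᵥ X = 0) (hM : ∀ i, X i ^ N ∣ M.mulVec X i) :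
    (M.updateRow j r).det ∈ Ideal.span (Set.range fun i => (X i : MvPolynomial ι k) ^ N) := by
  refine Ideal.span_mono (Set.image_subset_range _ {j}ᶜ)
    (mem_span_image_X_pow_compl_of_X_mul_mem ?_)
  rw [mul_comm]
  refine det_mul_mem_of_mulVec_mem _ X (fun i => ?_) j
  rcases eq_or_ne i j with rfl | hij
  · simp [Matrix.mulVec, Matrix.updateRow_self, hr]
  · have hi : (M.updateRow j r).mulVec X i = M.mulVec X i := by
      simp [Matrix.mulVec, Matrix.updateRow_ne hij]
    rw [hi]
    exact Ideal.mem_of_dvd _ (hM i) (Ideal.subset_span ⟨i, hij, rfl⟩)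

lemma det_sub_det_mem_span_X_pow {N : ℕ} {M D : Matrix ι ι (MvPolynomial ι k)}
    (hMD : M.mulVec X = D.mulVec X) (hM : ∀ i, X i ^ N ∣ M.mulVec X i) :
    D.det - M.det ∈ Ideal.span (Set.range fun i => (X i : MvPolynomial ι k) ^ N) := by
  let hybrid (s : Finset ι) : Matrix ι ι (MvPolynomial ι k) :=
    Matrix.of fun i => if i ∈ s then D i else M i
  have hmulVec (s : Finset ι) : (hybrid s).mulVec X = M.mulVec X := by
    ext1 i
    by_cases hi : i ∈ s
    · simpa [hybrid, Matrix.mulVec, hi] using (congrFun hMD i).symm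
    · simp [hybrid, Matrix.mulVec, hi]
  suffices ∀ s, (hybrid s).det - M.det ∈
      Ideal.span (Set.range fun i => (X i : MvPolynomial ι k) ^ N) by
    convert this Finset.univ
    ext i j
    simp [hybrid]
  intro s
  induction s using Finset.induction_on with
  | empty =>
    have hempty : hybrid ∅ = M := by ext i j; simp [hybrid]
    simp [hempty]
  | insert j s hj ih =>
    have hinsert : hybrid (insert j s) = (hybrid s).updateRow j (M j + (D j - M j)) := by
      ext i l
      by_cases hi : i = j <;> simp [hybrid, Matrix.updateRow_apply, hi]
    have hself : (hybrid s).updateRow j (M j) = hybrid s := by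
      ext i l
      by_cases hi : i = j <;> simp [hybrid, Matrix.updateRow_apply, hi, hj]
    have hrow : (D j - M j) ⬝ᵥ X = 0 := by
      rw [sub_dotProduct, sub_eq_zero]
      exact (congrFun hMD j).symm
    rw [hinsert, Matrix.det_updateRow_add, hself, add_sub_right_comm]
    exact Ideal.add_mem _ ih (det_updateRow_mem_span_X_pow _ j _ hrow fun i => by
      rw [hmulVec]; exact hM i)

lemma mul_det_notMem_span_X_pow [IsDomain k] {N : ℕ} {s σ : MvPolynomial ι k}
    (hs : constantCoeff s ≠ 0) (hσ : constantCoeff σ ≠ 0) {M : Matrix ι ι (MvPolynomial ι k)}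
    (hM : ∀ i, M.mulVec X i = s * X i ^ (N + 1)) :
    σ * M.det ∉ Ideal.span (Set.range fun i => (X i : MvPolynomial ι k) ^ (N + 1)) := by
  intro h
  have hdiag : M.mulVec X = (Matrix.diagonal fun i => s * X i ^ N).mulVec X := by
    ext1 i
    rw [hM, Matrix.mulVec_diagonal, pow_succ, mul_assoc]
  have hsub := det_sub_det_mem_span_X_pow hdiag fun i => hM i ▸ Dvd.intro_left s rfl
  rw [Matrix.det_diagonal, Finset.prod_mul_distrib, Finset.prod_const] at hsub
  have hmem := Ideal.add_mem _ (Ideal.mul_mem_left _ σ hsub) h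
  rw [mul_sub, sub_add_cancel, ← mul_assoc] at hmem
  refine mul_prod_X_pow_notMem_span_X_pow ?_ hmem
  rw [map_mul, map_pow]
  exact mul_ne_zero hσ (pow_ne_zero _ hs)

/- Wiebe's theorem: if `L * M` sends `x - p` to `S • (x - p) ^ N`, then multiplication by `det L`
carries `(f)` into `((x - p) ^ N)`, whereas `det (L * M)` is `S ^ n • ∏ (x - p) ^ (N - 1)` modulo
the latter ideal. -/
lemma mul_det_notMem_span_of_mem_minimalPrimes {F : Type*} [Field F] {f : ι → MvPolynomial ι F}
    {p : ι → F} (hp : RingHom.ker (eval p) ∈ (Ideal.span (Set.range f)).minimalPrimes)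
    {M : Matrix ι ι (MvPolynomial ι F)} (hM : M.mulVec (fun j => X j - C (p j)) = f)
    {σ : MvPolynomial ι F} (hσ : eval p σ ≠ 0) :
    σ * M.det ∉ Ideal.span (Set.range f) := by
  intro hmem
  obtain ⟨S, N, hS, hSN⟩ := exists_mul_X_sub_C_pow_mem hp
  choose L hL using fun i => Ideal.mem_span_range_iff_exists_fun.1
    (Ideal.mem_of_dvd _ (mul_dvd_mul_left S (pow_dvd_pow (X i - C (p i)) N.le_succ)) (hSN i))
  have hLf (i : ι) : (Matrix.of L).mulVec f i = S * (X i - C (p i)) ^ (N + 1) := hL i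
  have hLM : (Matrix.of L * M).mulVec (fun j => X j - C (p j)) = (Matrix.of L).mulVec f := by
    rw [← Matrix.mulVec_mulVec, hM]
  have hdet : σ * (Matrix.of L * M).det ∈
      Ideal.span (Set.range fun i => (X i - C (p i)) ^ (N + 1)) := by
    rw [Matrix.det_mul, mul_left_comm]
    refine det_mul_mem_of_mem_span_range _ f (fun i => ?_) hmem
    rw [hLf]
    exact Ideal.mul_mem_left _ _ (Ideal.subset_span ⟨i, rfl⟩)
  have hX (i : ι) : translate p (X i - C (p i)) = X i := by simp [translate]
  have htranslate := Ideal.mem_map_of_mem (translate p) hdet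
  rw [Ideal.map_span, ← Set.range_comp, map_mul, AlgHom.map_det] at htranslate
  simp only [Function.comp_def, map_pow, hX] at htranslate
  refine mul_det_notMem_span_X_pow (s := translate p S) ?_ ?_ (fun i => ?_) htranslate
  · rwa [constantCoeff_translate]
  · rwa [constantCoeff_translate]
  · have hi := congrArg (translate p) ((congrFun hLM i).trans (hLf i))
    simp only [Matrix.mulVec, dotProduct, map_sum, map_mul, map_pow, hX] at hi
    exact hi

end Wiebe

section Bezoutian

variable {k : Type*} [CommRing k] {ι : Type*}

section ApplyCoeff

variable {σ A : Type*} [CommRing A] [Algebra k A]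

/-- The polynomial over `k` obtained by applying a linear functional `φ : A → k` to the
coefficients of a polynomial over `A`. -/
def applyCoeff (φ : A →ₗ[k] k) (B : MvPolynomial σ A) : MvPolynomial σ k :=
  ∑ a ∈ B.support, monomial a (φ (coeff a B))

lemma eval_applyCoeff (φ : A →ₗ[k] k) (B : MvPolynomial σ A) (q : σ → k) :
    eval q (applyCoeff φ B) = φ (eval (algebraMap k A ∘ q) B) := by
  rw [applyCoeff, map_sum, eval_eq, map_sum]
  refine Finset.sum_congr rfl fun a _ => ?_
  have hsmul : coeff a B * ∏ i ∈ a.support, (algebraMap k A ∘ q) i ^ a i =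
      (∏ i ∈ a.support, q i ^ a i) • coeff a B := by
    simp only [Function.comp_apply, Algebra.smul_def, map_prod, map_pow, mul_comm]
  rw [eval_monomial, hsmul, map_smul, smul_eq_mul, mul_comm, Finsupp.prod]

lemma totalDegree_applyCoeff_le (φ : A →ₗ[k] k) (B : MvPolynomial σ A) :
    (applyCoeff φ B).totalDegree ≤ B.totalDegree :=
  totalDegree_finsetSum_le fun _ ha => (totalDegree_monomial_le _ _).trans (le_totalDegree ha)

end ApplyCoeff

variable [Fintype ι]

lemma totalDegree_det_le [DecidableEq ι] {σ : Type*} {M : Matrix ι ι (MvPolynomial σ k)} {δ : ℕ}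
    (h : ∀ i j, (M i j).totalDegree ≤ δ) : M.det.totalDegree ≤ Fintype.card ι * δ := by
  rw [Matrix.det_apply]
  refine totalDegree_finsetSum_le fun π _ => (totalDegree_smul_le _ _).trans ?_
  refine (totalDegree_finsetProd _ _).trans ((Finset.sum_le_sum fun i _ => h _ _).trans ?_)
  simp

lemma exists_C_monomial_sub_monomial_eq_sum (a : ι →₀ ℕ) :
    ∃ b : ι → MvPolynomial ι (MvPolynomial ι k),
      C (monomial a 1) - monomial a 1 = ∑ j, b j * (C (X j) - X j) ∧
      ∀ j, (b j).totalDegree ≤ a.degree - 1 := by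
  classical
  induction hN : a.degree generalizing a with
  | zero =>
    obtain rfl := (Finsupp.degree_eq_zero_iff a).1 hN
    exact ⟨0, by simp, by simp⟩
  | succ N ih =>
    obtain ⟨i, hi⟩ : ∃ i, a i ≠ 0 := by
      by_contra! h
      have : a = 0 := Finsupp.ext h
      simp [this] at hN
    obtain ⟨c, rfl⟩ : ∃ c, a = Finsupp.single i 1 + c :=
      exists_add_of_le (Finsupp.single_le_iff.2 (Nat.one_le_iff_ne_zero.2 hi))
    have hc : c.degree = N := by
      rw [map_add, Finsupp.degree_single] at hN
      omega
    obtain ⟨b, hb, hbdeg⟩ := ih c hc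
    refine ⟨fun j => C (X i) * b j + if j = i then monomial c 1 else 0, ?_, fun j => ?_⟩
    · simp only [monomial_single_add, pow_one, map_mul, add_mul, Finset.sum_add_distrib, mul_assoc,
        ← Finset.mul_sum, ← hb, ite_mul, zero_mul, Finset.sum_ite_eq', Finset.mem_univ, if_true]
      ring
    · refine (totalDegree_add _ _).trans (max_le ?_ ?_)
      · refine (totalDegree_mul _ _).trans ?_
        rw [totalDegree_C, zero_add]
        exact (hbdeg j).trans (by omega)
      · split_ifs
        · exact (totalDegree_monomial_le _ _).trans hc.le
        · simp

lemma exists_C_sub_map_C_eq_sum (f : MvPolynomial ι k) :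
    ∃ b : ι → MvPolynomial ι (MvPolynomial ι k),
      C f - map C f = ∑ j, b j * (C (X j) - X j) ∧
      ∀ j, (b j).totalDegree ≤ f.totalDegree - 1 := by
  choose b hb hbdeg using exists_C_monomial_sub_monomial_eq_sum (k := k) (ι := ι)
  refine ⟨fun j => ∑ a ∈ f.support, C (C (coeff a f)) * b a j, ?_, fun j => ?_⟩
  · conv_lhs => rw [f.as_sum]
    simp only [Finset.sum_mul]
    rw [Finset.sum_comm]
    simp only [mul_assoc, ← Finset.mul_sum, ← hb, map_sum, ← Finset.sum_sub_distrib]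
    refine Finset.sum_congr rfl fun a _ => ?_
    rw [mul_sub, ← map_mul, C_mul_monomial, map_monomial, C_mul_monomial, mul_one, mul_one]
  · refine totalDegree_finsetSum_le fun a ha => (totalDegree_mul _ _).trans ?_
    rw [totalDegree_C, zero_add]
    exact (hbdeg a j).trans (Nat.sub_le_sub_right (le_totalDegree ha) 1)

lemma exists_bezoutian_matrix (f : ι → MvPolynomial ι k) :
    ∃ B : Matrix ι ι (MvPolynomial ι (MvPolynomial ι k)),
      (∀ i j, (B i j).totalDegree ≤ (f i).totalDegree - 1) ∧
      ∀ q, (∀ i, eval q (f i) = 0) →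
        (B.map (eval (C ∘ q))).mulVec (fun j => X j - C (q j)) = f := by
  choose b hb hbdeg using fun i => exists_C_sub_map_C_eq_sum (f i)
  refine ⟨Matrix.of b, hbdeg, fun q hq => funext fun i => ?_⟩
  have heval : eval (C ∘ q) (map C (f i)) = (0 : MvPolynomial ι k) := by
    rw [eval_map, ← map_zero C, ← hq i]
    exact (eval₂_comp_left C (RingHom.id k) q (f i)).symm
  have hi := congrArg (eval (C ∘ q)) (hb i)
  simp only [map_sub, heval, sub_zero, eval_C, map_sum, map_mul, eval_X, Function.comp_apply] at hi
  exact hi.symm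

/- The separating polynomial is a linear functional of the Bezoutian determinant `Δ(x, z)`:
`Δ(x, q)` kills `x - q` modulo `(f)`, so it dies in the local ring at `p` if `q ≠ p`, whereas
`Δ(x, p)` survives there by Wiebe's theorem. -/
lemma exists_separating_of_mem_minimalPrimes {F : Type*} [Field F] {f : ι → MvPolynomial ι F}
    {δ : ℕ} (hf : ∀ i, (f i).totalDegree ≤ δ) {p : ι → F}
    (hp : RingHom.ker (eval p) ∈ (Ideal.span (Set.range f)).minimalPrimes) :
    ∃ h : MvPolynomial ι F, h.totalDegree ≤ Fintype.card ι * (δ - 1) ∧ eval p h = 1 ∧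
      ∀ q, (∀ i, eval q (f i) = 0) → q ≠ p → eval q h = 0 := by
  classical
  obtain ⟨B, hBdeg, hB⟩ := exists_bezoutian_matrix f
  have hpf (i : ι) : eval p (f i) = 0 := hp.le (Ideal.subset_span ⟨i, rfl⟩)
  have hprime := hp.isPrime
  let R := Localization.AtPrime (RingHom.ker (eval p))
  let Q : Ideal (MvPolynomial ι F) :=
    ((Ideal.span (Set.range f)).map (algebraMap _ R)).comap (algebraMap _ R)
  have hQ (g : MvPolynomial ι F) :
      g ∈ Q ↔ ∃ s, eval p s ≠ 0 ∧ s * g ∈ Ideal.span (Set.range f) :=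
    IsLocalization.algebraMap_mem_map_algebraMap_iff (RingHom.ker (eval p)).primeCompl _ _ _
  let ev (q : ι → F) := eval (C ∘ q) B.det
  have hev (q : ι → F) : ev q = (B.map (eval (C ∘ q))).det := RingHom.map_det _ _
  have hevp : ev p ∉ Q := by
    rw [hQ, hev]
    rintro ⟨s, hs, hmem⟩
    exact mul_det_notMem_span_of_mem_minimalPrimes hp (hB p hpf) hs hmem
  have hevq (q : ι → F) (hq : ∀ i, eval q (f i) = 0) (hqp : q ≠ p) : ev q ∈ Q := by
    obtain ⟨j, hj⟩ := Function.ne_iff.1 hqp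
    refine (hQ _).2 ⟨X j - C (q j), by simpa [sub_eq_zero] using hj.symm, ?_⟩
    rw [mul_comm, hev]
    refine det_mul_mem_of_mulVec_mem _ (fun j => X j - C (q j)) (fun i => ?_) j
    rw [hB q hq]
    exact Ideal.subset_span ⟨i, rfl⟩
  obtain ⟨φ, hφp, hφQ⟩ := Submodule.exists_le_ker_of_notMem (p := Q.restrictScalars F) hevp
  have heval (q : ι → F) :
      eval q (applyCoeff ((φ (ev p))⁻¹ • φ) B.det) = (φ (ev p))⁻¹ * φ (ev q) :=
    eval_applyCoeff _ _ _
  refine ⟨applyCoeff ((φ (ev p))⁻¹ • φ) B.det, ?_, ?_, fun q hq hqp => ?_⟩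
  · exact (totalDegree_applyCoeff_le _ _).trans
      (totalDegree_det_le fun i j => (hBdeg i j).trans (Nat.sub_le_sub_right (hf i) 1))
  · rw [heval, inv_mul_cancel₀ hφp]
  · rw [heval, hφQ (hevq q hq hqp), mul_zero]

end Bezoutian

section PrimeAvoidance

variable {k : Type*} [Field k]

lemma height_le_card_of_mvPolynomial {ι : Type*} [Fintype ι] (q : Ideal (MvPolynomial ι k))
    [q.IsPrime] : q.height ≤ Fintype.card ι := by
  have h := Ideal.height_le_ringKrullDim_of_isPrime (I := q)
  rw [MvPolynomial.ringKrullDim_of_isNoetherianRing, ringKrullDim_eq_zero_of_field, zero_add,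
    Nat.card_eq_fintype_card] at h
  exact_mod_cast h

variable [Infinite k] {R : Type*} [CommRing R] [Algebra k R]

lemma exists_mem_span_forall_notMem (G : Set R) {F : Set (Ideal R)} (hF : F.Finite)
    (hG : ∀ q ∈ F, ¬ G ⊆ q) : ∃ f ∈ Submodule.span k G, ∀ q ∈ F, f ∉ q := by
  classical
  let s : Finset (Subspace k (Submodule.span k G)) :=
    hF.toFinset.image fun q => (q.restrictScalars k).comap (Submodule.span k G).subtype
  have hs : ⊤ ∉ s := by
    intro htop
    obtain ⟨q, hq, hqtop⟩ := Finset.mem_image.1 htop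
    refine hG q (hF.mem_toFinset.1 hq) fun g hg => ?_
    rw [eq_top_iff] at hqtop
    exact hqtop (x := ⟨g, Submodule.subset_span hg⟩) trivial
  obtain ⟨f, hf⟩ := (Set.ne_univ_iff_exists_notMem _).1 (Subspace.biUnion_ne_univ_of_top_notMem hs)
  simp only [Set.mem_iUnion, not_exists] at hf
  exact ⟨f, f.2, fun q hq hfq =>
    hf _ (Finset.mem_image_of_mem _ (hF.mem_toFinset.2 hq)) hfq⟩

/- Each new element avoids the minimal primes over the previous ones that do not contain `G`, so
the height of the remaining primes increases by one at every step. -/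
lemma exists_fin_forall_le_height [IsNoetherianRing R] (G : Set R) (i : ℕ) :
    ∃ f : Fin i → R, (∀ j, f j ∈ Submodule.span k G) ∧
      ∀ q : Ideal R, q.IsPrime → Ideal.span (Set.range f) ≤ q → ¬ G ⊆ q → i ≤ q.height := by
  induction i with
  | zero => exact ⟨Fin.elim0, fun j => j.elim0, by simp⟩
  | succ i ih =>
    obtain ⟨f, hfG, hf⟩ := ih
    obtain ⟨g, hgG, hg⟩ := exists_mem_span_forall_notMem (k := k) G
      (F := {q ∈ (Ideal.span (Set.range f)).minimalPrimes | ¬ G ⊆ q})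
      ((Ideal.finite_minimalPrimes_of_isNoetherianRing R _).subset (Set.sep_subset _ _))
      fun q hq => hq.2
    refine ⟨Fin.snoc f g, Fin.lastCases (by simpa using hgG) (by simpa using hfG), ?_⟩
    intro q hq hle hGq
    have hgq : g ∈ q := hle (Ideal.subset_span ⟨Fin.last i, by simp⟩)
    have hfq : Ideal.span (Set.range f) ≤ q := by
      refine (Ideal.span_mono ?_).trans hle
      rintro _ ⟨j, rfl⟩
      exact ⟨j.castSucc, by simp⟩
    obtain ⟨p, hp, hpq⟩ := Ideal.exists_minimalPrimes_le hfq
    have hprime : p.IsPrime := hp.isPrime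
    have hGp : ¬ G ⊆ p := fun h => hGq (h.trans hpq)
    have hlt : p < q := lt_of_le_of_ne hpq fun h => hg p ⟨hp, hGp⟩ (h ▸ hgq)
    push_cast
    exact (add_le_add_left (hf p hprime hp.le hGp) 1).trans
      (Ideal.height_add_one_le_of_lt_of_isPrime hlt)

lemma exists_separating_of_mem_minimalPrimes_span {ι : Type*} [Fintype ι]
    {G : Set (MvPolynomial ι k)} {δ : ℕ} (hG : ∀ g ∈ G, g.totalDegree ≤ δ) {p : ι → k}
    (hp : RingHom.ker (eval p) ∈ (Ideal.span G).minimalPrimes) :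
    ∃ h : MvPolynomial ι k, h.totalDegree ≤ Fintype.card ι * (δ - 1) ∧ eval p h = 1 ∧
      ∀ q, (∀ g ∈ G, eval q g = 0) → q ≠ p → eval q h = 0 := by
  obtain ⟨f, hfG, hf⟩ := exists_fin_forall_le_height (k := k) G (Fintype.card ι)
  let e := Fintype.equivFin ι
  have hdeg (i : ι) : (f (e i)).totalDegree ≤ δ := by
    have hle : Submodule.span k G ≤ restrictTotalDegree ι k δ :=
      Submodule.span_le.2 fun g hg => (mem_restrictTotalDegree _ _ _).2 (hG g hg)
    exact (mem_restrictTotalDegree _ _ _).1 (hle (hfG _))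
  have hmem {I : Ideal (MvPolynomial ι k)} (hI : G ⊆ I) (i : ι) : f (e i) ∈ I :=
    (Submodule.span_le (p := I.restrictScalars k)).2 hI (hfG _)
  have hmin : RingHom.ker (eval p) ∈ (Ideal.span (Set.range (f ∘ e))).minimalPrimes := by
    refine ⟨⟨hp.isPrime, Ideal.span_le.2 ?_⟩, fun q hq hqp => ?_⟩
    · rintro _ ⟨i, rfl⟩
      exact hmem (fun g hg => hp.le (Ideal.subset_span hg)) i
    · have hprime : q.IsPrime := hq.1
      have hker : (RingHom.ker (eval p)).IsPrime := hp.isPrime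
      rw [e.surjective.range_comp] at hq
      by_contra hpq
      have hGq : ¬ G ⊆ q := fun h => hpq (hp.2 ⟨hprime, Ideal.span_le.2 h⟩ hqp)
      have hheight := (add_le_add_left (hf q hprime hq.2 hGq) 1).trans
        ((Ideal.height_add_one_le_of_lt_of_isPrime (lt_of_le_not_ge hqp hpq)).trans
          (height_le_card_of_mvPolynomial (RingHom.ker (eval p))))
      norm_cast at hheight
      omega
  obtain ⟨h, hhdeg, hhp, hh⟩ := exists_separating_of_mem_minimalPrimes hdeg hmin
  exact ⟨h, hhdeg, hhp, fun q hq => hh q (hmem (I := RingHom.ker (eval q)) hq)⟩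

end PrimeAvoidance

section FiniteTypeDomain

variable {k : Type*} [Field k]

lemma height_eq_of_isMaximal_mvPolynomial (s : ℕ) (M : Ideal (MvPolynomial (Fin s) k))
    [hM : M.IsMaximal] : M.height = s := by
  induction s with
  | zero =>
    have h := height_le_card_of_mvPolynomial M
    simpa using h
  | succ s ih =>
    let φ := (finSuccEquiv k s).toRingEquiv
    let P := M.comap φ.symm
    have hP : P.IsMaximal := Ideal.comap_isMaximal_of_equiv φ.symm (p := M)
    have hunder : (P.under (MvPolynomial (Fin s) k)).IsMaximal :=
      Polynomial.isMaximal_comap_C_of_isJacobsonRing P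
    have hover := Ideal.over_under (A := MvPolynomial (Fin s) k) (P := P)
    rw [← RingEquiv.height_comap φ.symm M,
      Polynomial.height_eq_height_add_one (P.under (MvPolynomial (Fin s) k)) P, ih]
    simp

lemma ringKrullDim_le_of_isIntegral (R S : Type*) [CommRing R] [CommRing S] [Algebra R S]
    [Algebra.IsIntegral R S] : ringKrullDim S ≤ ringKrullDim R :=
  Order.krullDim_le_of_strictMono (PrimeSpectrum.comap (algebraMap R S)) fun p q hpq =>
    Ideal.IsIntegral.comap_lt_comap (R := R) (I := p.asIdeal) (J := q.asIdeal) hpq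

variable {A : Type*} [CommRing A] [IsDomain A]

lemma le_height_of_isMaximal_of_isIntegral_mvPolynomial {s : ℕ} [IsNoetherianRing A]
    [Algebra (MvPolynomial (Fin s) k) A] [FaithfulSMul (MvPolynomial (Fin s) k) A]
    [Algebra.IsIntegral (MvPolynomial (Fin s) k) A] (M : Ideal A) [M.IsMaximal] :
    s ≤ M.height := by
  have hunder : (M.under (MvPolynomial (Fin s) k)).IsMaximal :=
    Ideal.isMaximal_comap_of_isIntegral_of_isMaximal M
  have hover := Ideal.over_under (A := MvPolynomial (Fin s) k) (P := M)
  rw [← height_eq_of_isMaximal_mvPolynomial s (M.under (MvPolynomial (Fin s) k)),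
    Ideal.height_eq_height_add_of_liesOver_of_hasGoingDown (M.under (MvPolynomial (Fin s) k)) M]
  exact le_self_add

variable [Algebra k A] [Algebra.FiniteType k A]

variable (k A) in
lemma exists_ringKrullDim_eq_and_trdeg_eq : ∃ s : ℕ, ringKrullDim A = s ∧
    Algebra.trdeg k A = s ∧ ∀ M : Ideal A, M.IsMaximal → s ≤ M.height := by
  have : IsNoetherianRing A := Algebra.FiniteType.isNoetherianRing k A
  obtain ⟨s, g, hinj, hint⟩ := exists_integral_inj_algHom_of_fg k A
  algebraize [g.toRingHom]
  have : FaithfulSMul (MvPolynomial (Fin s) k) A :=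
    (faithfulSMul_iff_algebraMap_injective _ _).2 hinj
  have : IsScalarTower k (MvPolynomial (Fin s) k) A := .of_algebraMap_eq' g.comp_algebraMap.symm
  have hheight (M : Ideal A) (hM : M.IsMaximal) : (s : ℕ∞) ≤ M.height :=
    le_height_of_isMaximal_of_isIntegral_mvPolynomial (k := k) M
  refine ⟨s, le_antisymm ?_ ?_, ?_, hheight⟩
  · refine (ringKrullDim_le_of_isIntegral (MvPolynomial (Fin s) k) A).trans ?_
    rw [MvPolynomial.ringKrullDim_of_isNoetherianRing]
    simp
  · obtain ⟨M, hM⟩ := Ideal.exists_maximal A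
    refine le_trans ?_ (Ideal.height_le_ringKrullDim_of_isPrime (I := M))
    exact_mod_cast hheight M hM
  · have h := lift_trdeg_add_eq k (MvPolynomial (Fin s) k) A
    rw [trdeg_eq_zero (R := MvPolynomial (Fin s) k), MvPolynomial.trdeg_of_isDomain] at h
    simpa using h.symm

include k in
lemma height_eq_ringKrullDim_of_isMaximal (M : Ideal A) [hM : M.IsMaximal] :
    (M.height : WithBot ℕ∞) = ringKrullDim A := by
  obtain ⟨s, hdim, -, hheight⟩ := exists_ringKrullDim_eq_and_trdeg_eq k A
  refine le_antisymm Ideal.height_le_ringKrullDim_of_isPrime ?_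
  rw [hdim]
  exact_mod_cast hheight M hM

lemma isTranscendenceBasis_of_ringKrullDim_eq {ι : Type*} [Fintype ι]
    {y : ι → A} (hy : AlgebraicIndependent k y) (hdim : ringKrullDim A = Fintype.card ι) :
    IsTranscendenceBasis k y := by
  obtain ⟨s, hs, htrdeg, -⟩ := exists_ringKrullDim_eq_and_trdeg_eq k A
  obtain rfl : s = Fintype.card ι := by exact_mod_cast hs.symm.trans hdim
  exact hy.isTranscendenceBasis_of_lift_trdeg_le_of_finite (by simp [htrdeg])

end FiniteTypeDomain

section IndependenceFromPoints

variable {k : Type*} [Field k] {A : Type*} [CommRing A] [Algebra k A]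
  {ι : Type*} [Fintype ι] {σ : Type*}

variable (k) in
/-- The elements `q j` are linearly independent over polynomials in the `y i`: the only relation
`∑ j, q j * Φ j (y) = 0` with polynomials `Φ j` over `k` is the trivial one. In a domain this says
that they are linearly independent over the field `k(y)` and that, unless there are none of them,
the `y i` are algebraically independent. -/
def LinearIndependentOver (y : σ → A) (q : ι → A) : Prop :=
  ∀ Φ : ι → MvPolynomial σ k, ∑ j, q j * aeval y (Φ j) = 0 → Φ = 0

lemma linearIndependentOver_iff_linearIndependent {y : σ → A} {q : ι → A} :
    LinearIndependentOver k y q ↔ LinearIndependent k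
      fun t : (_ : ι) × (σ →₀ ℕ) => q t.1 * aeval y (monomial t.2 (1 : k)) := by
  classical
  let T : (ι → MvPolynomial σ k) →ₗ[k] A :=
    ∑ j, (LinearMap.mulLeft k (q j) ∘ₗ (aeval y).toLinearMap) ∘ₗ LinearMap.proj j
  have hT (Φ : ι → MvPolynomial σ k) : T Φ = ∑ j, q j * aeval y (Φ j) := by
    simp [T, LinearMap.sum_apply]
  let b := Pi.basis fun _ : ι => basisMonomials σ k
  have hb : (fun t : (_ : ι) × (σ →₀ ℕ) => q t.1 * aeval y (monomial t.2 (1 : k))) = T ∘ b := by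
    funext ⟨j, m⟩
    simp [b, hT, Pi.single_apply, apply_ite (aeval y)]
  rw [hb]
  constructor
  · intro h
    refine b.linearIndependent.map' T (LinearMap.ker_eq_bot'.2 fun Φ hΦ => h Φ ?_)
    rw [← hT, hΦ]
  · intro h Φ hΦ
    have hcomb : Finsupp.linearCombination k (T ∘ b) (b.repr Φ) = 0 := by
      rw [← hT] at hΦ
      rw [← Finsupp.apply_linearCombination, b.linearCombination_repr, hΦ]
    exact b.repr.map_eq_zero_iff.1 (linearIndependent_iff.1 h _ hcomb)

lemma mk_aeval_aeval_C_mul_X {Q : Ideal A} {y : σ → A} {v : σ → k} {l : A}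
    (h : ∀ i, y i - algebraMap k A (v i) * l ∈ Q) (Φ : MvPolynomial σ k) :
    Ideal.Quotient.mk Q
        (Polynomial.aeval l (aeval (fun i => Polynomial.C (v i) * Polynomial.X) Φ)) =
      Ideal.Quotient.mk Q (aeval y Φ) := by
  have hy (i : σ) : Ideal.Quotient.mk Q (algebraMap k A (v i) * l) = Ideal.Quotient.mk Q (y i) :=
    (Ideal.Quotient.eq.2 (h i)).symm
  rw [← Ideal.Quotient.mkₐ_eq_mk k, ← AlgHom.comp_apply, ← AlgHom.comp_apply, ← AlgHom.comp_apply]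
  congr 1
  ext i
  simpa using hy i

variable [DecidableEq ι] {pt : ι → A →ₐ[k] k} {q : ι → A}

/- Evaluating the relation at the `j`-th point shows that `g j` has no constant term; then `l`
divides the relation, and it may be cancelled modulo the primes `Q j`. -/
lemma eq_zero_of_forall_sum_mul_aeval_mem {Q : ι → Ideal A} (hQ : ∀ j, (Q j).IsPrime)
    (hpt : ∀ j, Q j ≤ RingHom.ker (pt j)) (hq : ∀ i j, pt i (q j) = if j = i then 1 else 0)
    {l : A} (hl : ∀ j, pt j l = 0) (hlQ : ∀ j, l ∉ Q j) {g : ι → Polynomial k}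
    (hg : ∀ j, ∑ i, q i * Polynomial.aeval l (g i) ∈ Q j) : g = 0 := by
  have hX_dvd {g : ι → Polynomial k} (hg : ∀ j, ∑ i, q i * Polynomial.aeval l (g i) ∈ Q j)
      (j : ι) : Polynomial.X ∣ g j := by
    have h := hpt j (hg j)
    simp only [RingHom.mem_ker, map_sum, map_mul, hq, ite_mul, one_mul, zero_mul,
      Finset.sum_ite_eq', Finset.mem_univ, if_true, ← Polynomial.aeval_algHom_apply, hl] at h
    rwa [← Polynomial.coeff_zero_eq_aeval_zero, ← Polynomial.X_dvd_iff] at h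
  have hpow (e : ℕ) : ∀ g : ι → Polynomial k,
      (∀ j, ∑ i, q i * Polynomial.aeval l (g i) ∈ Q j) → ∀ j, Polynomial.X ^ e ∣ g j := by
    induction e with
    | zero => simp
    | succ e ih =>
      intro g hg j
      choose g' hg' using hX_dvd hg
      rw [hg' j, pow_succ']
      refine mul_dvd_mul_left _ (ih g' (fun i => ?_) j)
      refine ((hQ i).mem_or_mem (x := l) ?_).resolve_left (hlQ i)
      convert hg i using 1
      rw [Finset.mul_sum]
      refine Finset.sum_congr rfl fun i _ => ?_
      rw [hg' i, map_mul, Polynomial.aeval_X, mul_left_comm]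
  funext j
  exact Polynomial.eq_zero_of_dvd_of_natDegree_lt (hpow ((g j).natDegree + 1) g hg j) (by simp)

variable [Fintype σ]

/- By Krull's height theorem the locus where `y` is proportional to `v` has positive dimension at
each of the points, so relations between the `q j` may be tested along it. -/
lemma exists_prime_le_ker_forall_sub_mem [IsNoetherianRing A] {y : σ → A} {p : A →ₐ[k] k}
    (hmin : RingHom.ker p ∈ (Ideal.span (Set.range y)).minimalPrimes)
    (hheight : Fintype.card σ ≤ (RingHom.ker p).height) (v : σ → k) {i₀ : σ} (hv : v i₀ ≠ 0) :
    ∃ Q : Ideal A, Q.IsPrime ∧ Q ≤ RingHom.ker p ∧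
      (∀ i, y i - algebraMap k A (v i * (v i₀)⁻¹) * y i₀ ∈ Q) ∧ y i₀ ∉ Q := by
  classical
  let w (i : σ) : A := y i - algebraMap k A (v i * (v i₀)⁻¹) * y i₀
  have hy (i : σ) : p (y i) = 0 := hmin.le (Ideal.subset_span ⟨i, rfl⟩)
  let s : Finset A := (Finset.univ.erase i₀).image w
  have hs : Ideal.span (s : Set A) ≤ RingHom.ker p := by
    refine Ideal.span_le.2 fun a ha => ?_
    obtain ⟨i, -, rfl⟩ := Finset.mem_image.1 ha
    simp [w, RingHom.mem_ker, hy]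
  have hker : (RingHom.ker p).IsPrime := hmin.isPrime
  obtain ⟨Q, hQ, hQp⟩ := Ideal.exists_minimalPrimes_le hs
  have hprime : Q.IsPrime := hQ.isPrime
  have hw (i : σ) : w i ∈ Q := by
    rcases eq_or_ne i i₀ with rfl | hi
    · simp only [w, mul_inv_cancel₀ hv, map_one, one_mul, sub_self, Q.zero_mem]
    · exact hQ.le (Ideal.subset_span
        (Finset.mem_image_of_mem w (Finset.mem_erase.2 ⟨hi, Finset.mem_univ i⟩)))
  refine ⟨Q, hprime, hQp, hw, fun hy₀ => ?_⟩
  have hyQ : Ideal.span (Set.range y) ≤ Q := by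
    refine Ideal.span_le.2 ?_
    rintro _ ⟨i, rfl⟩
    simpa [w] using Q.add_mem (hw i) (Q.mul_mem_left (algebraMap k A (v i * (v i₀)⁻¹)) hy₀)
  have hle : (RingHom.ker p).height ≤ s.card :=
    (Ideal.height_mono (hmin.2 ⟨hprime, hyQ⟩ hQp)).trans
      (Ideal.height_le_card_of_mem_minimalPrimes_span_finset hQ)
  have hcard : s.card < Fintype.card σ :=
    Finset.card_image_le.trans_lt (Finset.card_lt_card (Finset.erase_ssubset (Finset.mem_univ i₀)))
  exact absurd (hheight.trans hle) (by exact_mod_cast hcard.not_ge)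

lemma linearIndependentOver_of_mem_minimalPrimes [Infinite k] [Nonempty σ] [IsNoetherianRing A]
    {y : σ → A} (hmin : ∀ j, RingHom.ker (pt j) ∈ (Ideal.span (Set.range y)).minimalPrimes)
    (hheight : ∀ j, Fintype.card σ ≤ (RingHom.ker (pt j)).height)
    (hq : ∀ i j, pt i (q j) = if j = i then 1 else 0) : LinearIndependentOver k y q := by
  intro Φ hΦ
  by_contra hne
  obtain ⟨j₀, hj₀⟩ := Function.ne_iff.1 hne
  let i₀ : σ := Classical.arbitrary σ
  obtain ⟨v, hv⟩ : ∃ v, eval v (Φ j₀ * X i₀) ≠ 0 := by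
    by_contra! h
    exact mul_ne_zero hj₀ (X_ne_zero i₀) (MvPolynomial.funext fun v => by simpa using h v)
  rw [map_mul, eval_X] at hv
  choose Q hQ hQpt hyQ hlQ using fun j =>
    exists_prime_le_ker_forall_sub_mem (hmin j) (hheight j) v (right_ne_zero_of_mul hv)
  let l : A := algebraMap k A (v i₀)⁻¹ * y i₀
  let g (j : ι) : Polynomial k := aeval (fun i => Polynomial.C (v i) * Polynomial.X) (Φ j)
  have hg : g = 0 := by
    refine eq_zero_of_forall_sum_mul_aeval_mem hQ hQpt hq (l := l) ?_ ?_ fun j => ?_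
    · intro j
      have h : pt j (y i₀) = 0 := (hmin j).le (Ideal.subset_span ⟨i₀, rfl⟩)
      simp [l, h]
    · intro j hl
      refine hlQ j ?_
      simpa [l, ← mul_assoc, ← map_mul, right_ne_zero_of_mul hv] using
        (Q j).mul_mem_left (algebraMap k A (v i₀)) hl
    · have hcongr (i : ι) : Ideal.Quotient.mk (Q j) (Polynomial.aeval l (g i)) =
          Ideal.Quotient.mk (Q j) (aeval y (Φ i)) :=
        mk_aeval_aeval_C_mul_X (fun i => by simpa [l, mul_assoc] using hyQ j i) (Φ i)
      rw [← Ideal.Quotient.eq_zero_iff_mem]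
      simp only [map_sum, map_mul, hcongr]
      simp only [← map_mul, ← map_sum, hΦ, map_zero]
  refine left_ne_zero_of_mul hv ?_
  have h := congrArg (Polynomial.aeval (1 : k)) (congrFun hg j₀)
  simp only [g, ← AlgHom.comp_apply, comp_aeval] at h
  simpa [aeval_def, eval₂_id] using h

end IndependenceFromPoints

section VeryGeneralPosition

variable {k : Type*} [Field k] {σ : Type*}

lemma exists_forall_eval_ne_zero [Uncountable k] [Finite σ] {κ : Type*} [Countable κ]
    {f : κ → MvPolynomial σ k} (hf : ∀ c, f c ≠ 0) : ∃ a, ∀ c, eval a (f c) ≠ 0 := by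
  obtain ⟨s, ⟨e⟩⟩ := Finite.exists_equiv_fin σ
  suffices h : ∀ (s : ℕ) (f : κ → MvPolynomial (Fin s) k), (∀ c, f c ≠ 0) →
      ∃ a, ∀ c, eval a (f c) ≠ 0 by
    obtain ⟨a, ha⟩ := h s (fun c => rename e (f c)) fun c =>
      (map_ne_zero_iff _ (rename_injective e e.injective)).2 (hf c)
    exact ⟨a ∘ e, fun c => by simpa only [eval_rename] using ha c⟩
  intro s
  induction s with
  | zero =>
    intro f hf
    refine ⟨Fin.elim0, fun c h => hf c ?_⟩
    refine MvPolynomial.funext fun a => ?_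
    rw [Subsingleton.elim a Fin.elim0, h, map_zero]
  | succ s ih =>
    intro f hf
    obtain ⟨a, ha⟩ := ih (fun c => (finSuccEquiv k s (f c)).leadingCoeff) fun c => by
      simpa using hf c
    let g (c : κ) : Polynomial k := (finSuccEquiv k s (f c)).map (eval a)
    have hg (c : κ) : g c ≠ 0 := fun h => ha c <| by
      rw [Polynomial.leadingCoeff, ← Polynomial.coeff_map]
      exact congrArg (Polynomial.coeff · _) h
    have hcountable : (⋃ c, {t | (g c).IsRoot t}).Countable :=
      Set.countable_iUnion fun c => (Polynomial.finite_setOfPred_isRoot (hg c)).countable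
    obtain ⟨t, ht⟩ : ∃ t, t ∉ ⋃ c, {t | (g c).IsRoot t} := by
      by_contra! h
      exact Set.not_countable_univ (Set.eq_univ_of_forall h ▸ hcountable)
    refine ⟨Fin.cons t a, fun c h => ht (Set.mem_iUnion.2 ⟨c, ?_⟩)⟩
    rwa [eval_eq_eval_mv_eval'] at h

lemma exists_ne_zero_forall_linearIndependent {A : Type*} [CommRing A] [Algebra k A] {ι : Type*}
    [Finite ι] (v : ι → MvPolynomial σ A) {a₀ : σ → k}
    (h₀ : LinearIndependent k fun t => eval (algebraMap k A ∘ a₀) (v t)) :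
    ∃ f : MvPolynomial σ k, f ≠ 0 ∧ ∀ a, eval a f ≠ 0 →
      LinearIndependent k fun t => eval (algebraMap k A ∘ a) (v t) := by
  classical
  have := Fintype.ofFinite ι
  obtain ⟨g, hg⟩ := (Fintype.linearCombination k
    fun t => eval (algebraMap k A ∘ a₀) (v t)).exists_leftInverse_of_injective
      (LinearMap.ker_eq_bot.2 (linearIndependent_iff_injective_fintypeLinearCombination.1 h₀))
  have hg₀ (t : ι) : g (eval (algebraMap k A ∘ a₀) (v t)) = Pi.single t 1 := by
    have h := LinearMap.congr_fun hg (Pi.single t 1)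
    rwa [LinearMap.comp_apply, Fintype.linearCombination_apply_single, one_smul] at h
  let D : Matrix ι ι (MvPolynomial σ k) :=
    Matrix.of fun t s => applyCoeff (LinearMap.proj s ∘ₗ g) (v t)
  have hD (a : σ → k) : (eval a).mapMatrix D =
      Matrix.of fun t => g (eval (algebraMap k A ∘ a) (v t)) := by
    ext t s
    simp [D, eval_applyCoeff]
  refine ⟨D.det, fun h => ?_, fun a ha => ?_⟩
  · have hdet : ((eval a₀).mapMatrix D).det = 0 := by rw [← RingHom.map_det, h, map_zero]
    have hone : (eval a₀).mapMatrix D = 1 := by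
      ext t s
      simp [hD, hg₀, Matrix.one_apply, Pi.single_apply, eq_comm]
    simp [hone] at hdet
  · rw [RingHom.map_det, hD] at ha
    exact (Matrix.linearIndependent_rows_of_det_ne_zero ha).of_comp g

variable [Uncountable k] [Finite σ] {κ : Type*} [Countable κ] {A : κ → Type*}
  [∀ c, CommRing (A c)] [∀ c, Algebra k (A c)]

lemma exists_forall_linearIndependent_eval {ι : κ → Type*} [∀ c, Countable (ι c)]
    (v : ∀ c, ι c → MvPolynomial σ (A c))
    (h : ∀ c, ∃ a : σ → k, LinearIndependent k fun t => eval (algebraMap k (A c) ∘ a) (v c t)) :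
    ∃ a : σ → k, ∀ c, LinearIndependent k fun t => eval (algebraMap k (A c) ∘ a) (v c t) := by
  have hfin (c : Σ c, Finset (ι c)) : ∃ f : MvPolynomial σ k, f ≠ 0 ∧ ∀ a, eval a f ≠ 0 →
      LinearIndependent k fun t : c.2 => eval (algebraMap k (A c.1) ∘ a) (v c.1 t) := by
    obtain ⟨a₀, ha₀⟩ := h c.1
    exact exists_ne_zero_forall_linearIndependent (fun t : c.2 => v c.1 t)
      (ha₀.comp _ Subtype.val_injective)
  choose f hf0 hf using hfin
  obtain ⟨a, ha⟩ := exists_forall_eval_ne_zero hf0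
  exact ⟨a, fun c => linearIndependent_iff_finset_linearIndependent.2 fun s => hf ⟨c, s⟩ a (ha _)⟩

end VeryGeneralPosition

section AffineForm

variable {ι : Type*} [Fintype ι]

/-- The affine form `a₀ + ∑ j, aⱼ xⱼ`, where the constant coefficient is indexed by `none`. -/
def affineForm {A : Type*} [CommRing A] (a : Option ι → A) (x : ι → A) : A :=
  a none + ∑ j, a (some j) * x j

lemma map_affineForm {A B F : Type*} [CommRing A] [CommRing B] [FunLike F A B] [RingHomClass F A B]
    (φ : F) (a : Option ι → A) (x : ι → A) :
    φ (affineForm a x) = affineForm (φ ∘ a) (φ ∘ x) := by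
  simp [affineForm]

lemma totalDegree_affineForm_le {k : Type*} [CommRing k] (a : Option ι → k) :
    (affineForm (C ∘ a) X : MvPolynomial ι k).totalDegree ≤ 1 := by
  refine (totalDegree_add _ _).trans (max_le (by simp) ?_)
  refine totalDegree_finsetSum_le fun j _ => (totalDegree_mul _ _).trans ?_
  simpa using (isHomogeneous_X k j).totalDegree_le

variable {k : Type*} [Field k] [Uncountable k] {σ : Type*} [Finite σ] {κ : Type*} [Countable κ]
  {A : κ → Type*} [∀ c, CommRing (A c)] [∀ c, Algebra k (A c)]
  {m : κ → Type*} [∀ c, Fintype (m c)]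

lemma exists_forall_linearIndependentOver_affineForm (x : ∀ c, ι → A c) (q : ∀ c, m c → A c)
    (h : ∀ c, ∃ a : σ → Option ι → k,
      LinearIndependentOver k (fun i => affineForm (algebraMap k (A c) ∘ a i) (x c)) (q c)) :
    ∃ a : σ → Option ι → k, ∀ c,
      LinearIndependentOver k (fun i => affineForm (algebraMap k (A c) ∘ a i) (x c)) (q c) := by
  have := Fintype.ofFinite σ
  let y (c : κ) (i : σ) : MvPolynomial (σ × Option ι) (A c) :=
    affineForm (fun o => X (i, o)) (C ∘ x c)
  let v (c : κ) (t : (_ : m c) × (σ →₀ ℕ)) : MvPolynomial (σ × Option ι) (A c) :=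
    C (q c t.1) * t.2.prod fun i e => y c i ^ e
  have hv (a : σ × Option ι → k) (c : κ) (t : (_ : m c) × (σ →₀ ℕ)) :
      eval (algebraMap k (A c) ∘ a) (v c t) = q c t.1 *
        aeval (fun i => affineForm (algebraMap k (A c) ∘ fun o => a (i, o)) (x c))
          (monomial t.2 (1 : k)) := by
    have hcomp : eval (algebraMap k (A c) ∘ a) ∘ (C ∘ x c) = x c := by
      funext j
      simp
    simp only [v, y, map_mul, eval_C, map_finsuppProd, map_pow, map_affineForm, hcomp,
      aeval_monomial, map_one, one_mul]
    congr! 5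
    congr 1
    funext o
    simp
  simp only [linearIndependentOver_iff_linearIndependent] at h ⊢
  obtain ⟨a, ha⟩ := exists_forall_linearIndependent_eval v fun c => by
    obtain ⟨a, ha⟩ := h c
    refine ⟨fun p => a p.1 p.2, ?_⟩
    simpa only [hv] using ha
  exact ⟨fun i o => a (i, o), fun c => by simpa only [hv] using ha c⟩

end AffineForm

section Dictionary

variable {n}

lemma zeroLocus_anti {I J : Set (MvPolynomial (Fin n) ℂ)} (h : I ⊆ J) :
    zeroLocus n J ⊆ zeroLocus n I :=
  fun _ hx f hf => hx f (h hf)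

lemma subset_zeroLocus_iff {V : Set (Fin n → ℂ)} {I : Set (MvPolynomial (Fin n) ℂ)} :
    V ⊆ zeroLocus n I ↔ I ⊆ vanishingIdeal n V :=
  ⟨fun h f hf _ hx => h hx f hf, fun h x hx _ hf => h hf x hx⟩

lemma IsAlgebraicSet.zeroLocus_vanishingIdeal {V : Set (Fin n → ℂ)} (hV : IsAlgebraicSet n V) :
    zeroLocus n (vanishingIdeal n V) = V := by
  obtain ⟨I, rfl⟩ := hV
  exact (zeroLocus_anti (subset_zeroLocus_iff.1 subset_rfl)).antisymm
    (subset_zeroLocus_iff.2 subset_rfl)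

lemma IsAlgebraicSet.vanishingIdeal_le_iff {V W : Set (Fin n → ℂ)} (hW : IsAlgebraicSet n W) :
    vanishingIdeal n W ≤ vanishingIdeal n V ↔ V ⊆ W := by
  rw [← SetLike.coe_subset_coe, ← subset_zeroLocus_iff, hW.zeroLocus_vanishingIdeal]

lemma vanishingIdeal_zeroLocus (P : Ideal (MvPolynomial (Fin n) ℂ)) [P.IsPrime] :
    vanishingIdeal n (zeroLocus n P) = P := by
  have h := MvPolynomial.IsPrime.vanishingIdeal_zeroLocus (K := ℂ) P
  rwa [SetLike.ext'_iff] at h ⊢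

lemma IsIrredVariety.isPrime_vanishingIdeal {W : Set (Fin n → ℂ)} (hW : IsIrredVariety n W) :
    (vanishingIdeal n W).IsPrime := by
  obtain ⟨-, ⟨x, hx⟩, hirred⟩ := hW
  refine ⟨(Ideal.ne_top_iff_one _).2 fun h => by simpa using h x hx, fun {f g} hfg => ?_⟩
  have hcover : W ⊆ zeroLocus n {f} ∪ zeroLocus n {g} := fun z hz => by
    simpa [zeroLocus] using hfg z hz
  simpa [subset_zeroLocus_iff] using hirred _ _ ⟨_, rfl⟩ ⟨_, rfl⟩ hcover

lemma isIrredVariety_zeroLocus (P : Ideal (MvPolynomial (Fin n) ℂ)) [hP : P.IsPrime] :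
    IsIrredVariety n (zeroLocus n P) := by
  refine ⟨⟨_, rfl⟩, ?_, ?_⟩
  · by_contra! hempty
    refine hP.ne_top ((Ideal.eq_top_iff_one _).2 ?_)
    rw [← vanishingIdeal_zeroLocus P, hempty]
    exact fun x hx => hx.elim
  · intro V₁ V₂ hV₁ hV₂ hcover
    rw [← hV₁.vanishingIdeal_le_iff, ← hV₂.vanishingIdeal_le_iff, vanishingIdeal_zeroLocus,
      ← hP.inf_le]
    rintro f ⟨hf₁, hf₂⟩
    rw [← vanishingIdeal_zeroLocus P]
    exact fun x hx => (hcover hx).elim (hf₁ x) (hf₂ x)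

lemma isIrredComponent_zeroLocus_iff {W : Set (Fin n → ℂ)} {I : Set (MvPolynomial (Fin n) ℂ)} :
    IsIrredComponent n W (zeroLocus n I) ↔
      IsIrredVariety n W ∧ vanishingIdeal n W ∈ (Ideal.span I).minimalPrimes := by
  refine and_congr_right fun hW => ?_
  rw [subset_zeroLocus_iff, ← Ideal.span_le]
  constructor
  · rintro ⟨hIW, hmax⟩
    refine ⟨⟨hW.isPrime_vanishingIdeal, hIW⟩, fun P ⟨hP, hIP⟩ hPW => ?_⟩
    have h := hmax (zeroLocus n P) (isIrredVariety_zeroLocus P)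
      (subset_zeroLocus_iff.2 hPW) (zeroLocus_anti (Ideal.span_le.1 hIP))
    rw [← h, vanishingIdeal_zeroLocus]
  · rintro ⟨⟨-, hIW⟩, hmin⟩
    refine ⟨hIW, fun W' hW' hWW' hW'I => hWW'.antisymm' ?_⟩
    rw [← hW.1.vanishingIdeal_le_iff]
    exact hmin ⟨hW'.isPrime_vanishingIdeal, Ideal.span_le.2 (subset_zeroLocus_iff.1 hW'I)⟩
      (hW'.1.vanishingIdeal_le_iff.2 hWW')

lemma IsAlgebraicSet.finite_isIrredComponent {V : Set (Fin n → ℂ)} (hV : IsAlgebraicSet n V) :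
    {W | IsIrredComponent n W V}.Finite := by
  obtain ⟨I, rfl⟩ := hV
  refine Set.Finite.of_finite_image (f := vanishingIdeal n)
    ((Ideal.finite_minimalPrimes_of_isNoetherianRing _ (Ideal.span I)).subset ?_) ?_
  · rintro _ ⟨W, hW, rfl⟩
    exact (isIrredComponent_zeroLocus_iff.1 hW).2
  · intro W hW W' hW' h
    rw [← hW.1.1.zeroLocus_vanishingIdeal, h, hW'.1.1.zeroLocus_vanishingIdeal]

lemma IsAlgebraicSet.exists_isIrredComponent {V : Set (Fin n → ℂ)} (hV : IsAlgebraicSet n V)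
    (hne : V.Nonempty) : ∃ W, IsIrredComponent n W V := by
  obtain ⟨I, rfl⟩ := hV
  obtain ⟨x, hx⟩ := hne
  have hle : Ideal.span I ≤ RingHom.ker (eval x) := Ideal.span_le.2 fun f hf => hx f hf
  have hmax : (RingHom.ker (eval x)).IsPrime := RingHom.ker_isPrime _
  obtain ⟨P, hP, -⟩ := Ideal.exists_minimalPrimes_le hle
  have hprime : P.IsPrime := hP.isPrime
  refine ⟨zeroLocus n P, isIrredComponent_zeroLocus_iff.2 ⟨isIrredVariety_zeroLocus P, ?_⟩⟩
  rwa [vanishingIdeal_zeroLocus]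

lemma IsAlgebraicSet.vanishingIdeal_lt_iff {V W : Set (Fin n → ℂ)} (hV : IsAlgebraicSet n V)
    (hW : IsAlgebraicSet n W) : vanishingIdeal n W < vanishingIdeal n V ↔ V ⊂ W := by
  rw [lt_iff_le_not_ge, hW.vanishingIdeal_le_iff, hV.vanishingIdeal_le_iff, Set.ssubset_def]

lemma IsAlgebraicSet.hasChain_iff_le_ringKrullDim {V : Set (Fin n → ℂ)}
    (hV : IsAlgebraicSet n V) (d : ℕ) :
    HasChain n V d ↔ d ≤ ringKrullDim (MvPolynomial (Fin n) ℂ ⧸ vanishingIdeal n V) := by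
  rw [ringKrullDim_quotient, Order.le_krullDim_iff]
  constructor
  · rintro ⟨W, hW, hlt, hWV⟩
    have hle (i) : vanishingIdeal n V ≤ vanishingIdeal n (W i) :=
      fun f hf x hx => hf x (hWV (StrictMono.monotone hlt (Fin.le_last i) hx))
    refine ⟨⟨d, fun i => ⟨⟨_, (hW i.rev).isPrime_vanishingIdeal⟩, hle i.rev⟩, fun i => ?_⟩, rfl⟩
    exact ((hW _).1.vanishingIdeal_lt_iff (hW _).1).2
      (hlt _ _ (Fin.rev_lt_rev.2 i.castSucc_lt_succ))
  · rintro ⟨l, rfl⟩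
    have hirred (i) : IsIrredVariety n (zeroLocus n (l i).1.asIdeal) :=
      isIrredVariety_zeroLocus _
    refine ⟨fun i => zeroLocus n (l i.rev).1.asIdeal, fun i => hirred _, fun i j hij => ?_, ?_⟩
    · rw [← (hirred _).1.vanishingIdeal_lt_iff (hirred _).1, vanishingIdeal_zeroLocus,
        vanishingIdeal_zeroLocus]
      exact l.strictMono (Fin.rev_lt_rev.2 hij)
    · exact (zeroLocus_anti (l _).2).trans hV.zeroLocus_vanishingIdeal.subset

lemma IsIrredVariety.ringKrullDim_eq_dim {W : Set (Fin n → ℂ)} (hW : IsIrredVariety n W) :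
    ringKrullDim (MvPolynomial (Fin n) ℂ ⧸ vanishingIdeal n W) = dim n W := by
  have := hW.isPrime_vanishingIdeal
  obtain ⟨s, hs, -⟩ := exists_ringKrullDim_eq_and_trdeg_eq ℂ
    (MvPolynomial (Fin n) ℂ ⧸ vanishingIdeal n W)
  have hchain : {d | HasChain n W d} = Set.Iic s := by
    ext d
    simp [hW.1.hasChain_iff_le_ringKrullDim, hs]
  rw [dim, hchain, csSup_Iic, hs]

end Dictionary

section FunctionField

variable (S A F K : Type*) [CommRing S] [IsDomain S] [CommRing A] [Algebra S A]
  [Algebra.IsAlgebraic S A] [Algebra.FiniteType S A] [Field F] [Field K]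
  [Algebra S F] [IsFractionRing S F] [Algebra A K] [IsFractionRing A K] [Algebra S K]
  [IsScalarTower S A K] [Algebra F K] [IsScalarTower S F K]

include S A in
lemma finite_of_isFractionRing_of_isAlgebraic : Module.Finite F K := by
  have : FaithfulSMul S K := FaithfulSMul.trans S F K
  have : Algebra.IsAlgebraic S K := (IsFractionRing.isAlgebraic_iff' S A K).1 inferInstance
  have : Algebra.IsAlgebraic F K := IsFractionRing.comap_isAlgebraic_iff.1 this
  have : Algebra.EssFiniteType A K := .of_isLocalization K (nonZeroDivisors A)
  have : Algebra.EssFiniteType S K := .comp S A K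
  have : Algebra.EssFiniteType F K := .of_comp S F K
  exact Algebra.finite_of_essFiniteType_of_isAlgebraic

variable {S A}

lemma card_le_finrank_of_linearIndependent {ι : Type*} [Fintype ι] {q : ι → A}
    (hq : LinearIndependent S q) : Fintype.card ι ≤ Module.finrank F K := by
  have := finite_of_isFractionRing_of_isAlgebraic S A F K
  have hq' : LinearIndependent S (algebraMap A K ∘ q) :=
    hq.map' (IsScalarTower.toAlgHom S A K).toLinearMap
      (LinearMap.ker_eq_bot.2 (IsFractionRing.injective A K))
  exact (hq'.localization F (nonZeroDivisors S)).fintype_card_le_finrank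

include F K in
lemma exists_injective_algHom_of_linearIndependent [CharZero F] {Ω : Type*} [Field Ω]
    [IsAlgClosed Ω] [Algebra F Ω] [Algebra S Ω] [IsScalarTower S F Ω] {m : ℕ} {q : Fin m → A}
    (hq : LinearIndependent S q) :
    ∃ θ : Fin m → A →ₐ[S] Ω, Function.Injective θ ∧ ∀ i, Function.Injective (θ i) := by
  have := finite_of_isFractionRing_of_isAlgebraic S A F K
  have hcard : Fintype.card (Fin m) ≤ Fintype.card (K →ₐ[F] Ω) := by
    rw [AlgHom.card]
    exact card_le_finrank_of_linearIndependent F K hq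
  obtain ⟨e⟩ := Function.Embedding.nonempty_of_card_le hcard
  refine ⟨fun i => ((e i).restrictScalars S).comp (IsScalarTower.toAlgHom S A K),
    fun i j hij => e.injective ?_, fun i => (e i).injective.comp (IsFractionRing.injective A K)⟩
  refine AlgHom.coe_ringHom_injective (IsLocalization.ringHom_ext (nonZeroDivisors A) ?_)
  exact RingHom.ext fun a => DFunLike.congr_fun hij a

end FunctionField

section GenericPoint

/-- The field of definition of the generic points: an algebraic closure of the field of rational
functions in the variables `σ`. -/
abbrev GenericField (k σ : Type*) [Field k] : Type _ :=
  AlgebraicClosure (FractionRing (MvPolynomial σ k))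

variable {k : Type*} [Field k] {σ : Type*}

section

variable {A : Type*} [CommRing A] [Algebra k A] {y : σ → A}

lemma isAlgebraic_of_isTranscendenceBasis [IsDomain A] [Algebra (MvPolynomial σ k) A]
    (hy : IsTranscendenceBasis k y)
    (halg : algebraMap (MvPolynomial σ k) A = (aeval y : MvPolynomial σ k →ₐ[k] A).toRingHom) :
    Algebra.IsAlgebraic (MvPolynomial σ k) A := by
  have := hy.isAlgebraic
  refine Algebra.IsAlgebraic.of_ringHom_of_comp_eq (S := Algebra.adjoin k (Set.range y)) (B := A)
    hy.1.aevalEquiv (RingHom.id A) hy.1.aevalEquiv.surjective Function.injective_id ?_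
  rw [halg]
  ext Φ <;> simp

variable {ι : Type*} [Fintype ι] {q : ι → A}

lemma LinearIndependentOver.algebraicIndependent [Nonempty ι]
    (hq : LinearIndependentOver k y q) : AlgebraicIndependent k y := by
  rw [algebraicIndependent_iff]
  intro Φ hΦ
  exact congrFun (hq (fun _ => Φ) (by simp [hΦ])) (Classical.arbitrary ι)

lemma LinearIndependentOver.linearIndependent [Algebra (MvPolynomial σ k) A]
    (hq : LinearIndependentOver k y q)
    (halg : algebraMap (MvPolynomial σ k) A = (aeval y : MvPolynomial σ k →ₐ[k] A).toRingHom) :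
    LinearIndependent (MvPolynomial σ k) q := by
  refine Fintype.linearIndependent_iff.2 fun Φ hΦ => congrFun (hq Φ ?_)
  simpa [Algebra.smul_def, halg, mul_comm] using hΦ

end

variable {A : Type*} [CommRing A] [IsDomain A] [Algebra k A] [Algebra.FiniteType k A] {y : σ → A}
  [Fintype σ]

lemma exists_forall_linearIndependentOver_imp_le (hdim : ringKrullDim A = Fintype.card σ) :
    ∃ r, ∀ (m : ℕ) (q : Fin m → A), LinearIndependentOver k y q → m ≤ r := by
  by_cases hy : AlgebraicIndependent k y
  · have hbasis := isTranscendenceBasis_of_ringKrullDim_eq hy hdim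
    algebraize [(aeval y : MvPolynomial σ k →ₐ[k] A).toRingHom]
    have : FaithfulSMul (MvPolynomial σ k) A := (faithfulSMul_iff_algebraMap_injective _ _).2 hy
    have : IsScalarTower k (MvPolynomial σ k) A := .of_algebraMap_eq' (aeval y).comp_algebraMap.symm
    have := isAlgebraic_of_isTranscendenceBasis hbasis rfl
    have : Algebra.FiniteType (MvPolynomial σ k) A := .of_restrictScalars_finiteType k _ A
    let := FractionRing.liftAlgebra (MvPolynomial σ k) (FractionRing A)
    refine ⟨Module.finrank (FractionRing (MvPolynomial σ k)) (FractionRing A), fun m q hq => ?_⟩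
    simpa using card_le_finrank_of_linearIndependent _ _ (hq.linearIndependent rfl)
  · refine ⟨0, fun m q hq => ?_⟩
    by_contra! hm
    have := Fin.pos_iff_nonempty.1 hm
    exact hy hq.algebraicIndependent

lemma exists_injective_algHom_genericField [CharZero k] (hdim : ringKrullDim A = Fintype.card σ)
    {m : ℕ} {q : Fin m → A} (hq : LinearIndependentOver k y q) :
    ∃ θ : Fin m → A →ₐ[k] GenericField k σ, Function.Injective θ ∧ ∀ i,
      Function.Injective (θ i) ∧
        ∀ j, θ i (y j) = algebraMap (MvPolynomial σ k) (GenericField k σ) (X j) := by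
  rcases isEmpty_or_nonempty (Fin m) with _ | _
  · exact ⟨isEmptyElim, fun i => isEmptyElim i, isEmptyElim⟩
  have hbasis := isTranscendenceBasis_of_ringKrullDim_eq hq.algebraicIndependent hdim
  algebraize [(aeval y : MvPolynomial σ k →ₐ[k] A).toRingHom]
  have : FaithfulSMul (MvPolynomial σ k) A :=
    (faithfulSMul_iff_algebraMap_injective _ _).2 hbasis.1
  have : IsScalarTower k (MvPolynomial σ k) A := .of_algebraMap_eq' (aeval y).comp_algebraMap.symm
  have := isAlgebraic_of_isTranscendenceBasis hbasis rfl
  have : Algebra.FiniteType (MvPolynomial σ k) A := .of_restrictScalars_finiteType k _ A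
  have : CharZero (FractionRing (MvPolynomial σ k)) :=
    charZero_of_injective_algebraMap (algebraMap k _).injective
  let := FractionRing.liftAlgebra (MvPolynomial σ k) (FractionRing A)
  obtain ⟨θ, hθ, hθ'⟩ := exists_injective_algHom_of_linearIndependent
    (FractionRing (MvPolynomial σ k)) (FractionRing A) (Ω := GenericField k σ)
    (hq.linearIndependent rfl)
  refine ⟨fun i => (θ i).restrictScalars k, fun i i' h => hθ ?_, fun i => ⟨hθ' i, fun j => ?_⟩⟩
  · exact AlgHom.restrictScalars_injective k h
  · rw [← (θ i).commutes (X j)]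
    exact congrArg (θ i) (aeval_X y j).symm

end GenericPoint

section GenericPoint

variable {k σ ι : Type*} [Field k]

/-- A generic point of the variety of the prime `P` in the fibre of `y` over the generic point of
affine space, whose coordinates are the variables `X i`. -/
structure IsGenericPoint (P : Ideal (MvPolynomial ι k)) (y : σ → MvPolynomial ι k)
    (pt : ι → GenericField k σ) : Prop where
  ker_aeval : RingHom.ker (aeval pt : MvPolynomial ι k →ₐ[k] GenericField k σ) = P
  aeval_eq : ∀ i, aeval pt (y i) = algebraMap (MvPolynomial σ k) (GenericField k σ) (X i)

variable {P : Ideal (MvPolynomial ι k)} {y : σ → MvPolynomial ι k}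

lemma exists_injective_isGenericPoint [CharZero k] [Fintype σ] [Finite ι] [P.IsPrime]
    (hdim : ringKrullDim (MvPolynomial ι k ⧸ P) = Fintype.card σ)
    {m : ℕ} {q : Fin m → MvPolynomial ι k ⧸ P}
    (hq : LinearIndependentOver k (fun i => Ideal.Quotient.mkₐ k P (y i)) q) :
    ∃ pt : Fin m → ι → GenericField k σ,
      Function.Injective pt ∧ ∀ i, IsGenericPoint P y (pt i) := by
  obtain ⟨θ, hθ, hθ'⟩ := exists_injective_algHom_genericField hdim hq
  have haeval (i : Fin m) (f : MvPolynomial ι k) :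
      aeval (fun j => θ i (Ideal.Quotient.mkₐ k P (X j))) f = θ i (Ideal.Quotient.mkₐ k P f) :=
    DFunLike.congr_fun (aeval_unique ((θ i).comp (Ideal.Quotient.mkₐ k P))).symm f
  refine ⟨fun i j => θ i (Ideal.Quotient.mkₐ k P (X j)), fun i i' h => hθ ?_, fun i => ⟨?_, ?_⟩⟩
  · refine AlgHom.ext ((Ideal.Quotient.mkₐ_surjective k P).forall.2 fun f => ?_)
    rw [← haeval, ← haeval]
    exact congrArg (fun pt => aeval pt f) h
  · ext f
    rw [RingHom.mem_ker, haeval, map_eq_zero_iff _ (hθ' i).1, Ideal.Quotient.mkₐ_eq_mk,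
      Ideal.Quotient.eq_zero_iff_mem]
  · intro j
    rw [haeval, (hθ' i).2]

end GenericPoint

section IsolatedGenericPoint

variable {k σ ι : Type*} [Field k] {P : Ideal (MvPolynomial ι k)} {y : σ → MvPolynomial ι k}
  {pt : ι → GenericField k σ}

variable (k σ) in
lemma algebraMap_genericField_injective :
    Function.Injective (algebraMap (MvPolynomial σ k) (GenericField k σ)) :=
  have := FaithfulSMul.trans (MvPolynomial σ k) (FractionRing (MvPolynomial σ k))
    (GenericField k σ)
  FaithfulSMul.algebraMap_injective _ _

lemma algebraicIndependent_algebraMap_X :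
    AlgebraicIndependent k fun i => algebraMap (MvPolynomial σ k) (GenericField k σ) (X i) :=
  (algebraicIndependent_X σ k).map'
    (f := IsScalarTower.toAlgHom k (MvPolynomial σ k) (GenericField k σ))
    (algebraMap_genericField_injective k σ)

lemma IsGenericPoint.algebraicIndependent (h : IsGenericPoint P y pt) :
    AlgebraicIndependent k fun i => Ideal.Quotient.mkₐ k P (y i) := by
  let θ : MvPolynomial ι k ⧸ P →ₐ[k] GenericField k σ :=
    Ideal.Quotient.liftₐ P (aeval pt) fun f hf => by rwa [← h.ker_aeval] at hf
  refine .of_comp θ ?_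
  exact (funext h.aeval_eq : θ ∘ (fun i => Ideal.Quotient.mkₐ k P (y i)) = _) ▸
    algebraicIndependent_algebraMap_X

lemma isMaximal_of_forall_isIntegral_mk_X {Q : Ideal (MvPolynomial ι k)} [Q.IsPrime]
    (hQ : ∀ j, IsIntegral k (Ideal.Quotient.mk Q (X j))) : Q.IsMaximal := by
  have htop : Algebra.adjoin k (range fun j => Ideal.Quotient.mkₐ k Q (X j)) = ⊤ := by
    rw [range_comp' (Ideal.Quotient.mkₐ k Q) X, ← AlgHom.map_adjoin, adjoin_range_X,
      Algebra.map_top, AlgHom.range_eq_top]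
    exact Ideal.Quotient.mkₐ_surjective k Q
  have hint : Algebra.IsIntegral k (MvPolynomial ι k ⧸ Q) := by
    rw [← integralClosure_eq_top_iff, ← top_le_iff, ← htop]
    exact Algebra.adjoin_le (forall_mem_range.2 hQ)
  exact Ideal.Quotient.maximal_of_isField Q
    (isField_of_isIntegral_of_isField' (Field.toIsField k))

lemma isMaximal_of_isTranscendenceBasis [P.IsPrime]
    (hy : IsTranscendenceBasis k fun i => Ideal.Quotient.mkₐ k P (y i))
    {Q : Ideal (MvPolynomial ι (GenericField k σ))} [Q.IsPrime]
    (hPQ : P ≤ Q.comap (map (algebraMap k (GenericField k σ))))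
    (hQ : ∀ i, map (algebraMap k (GenericField k σ)) (y i) -
      C (algebraMap (MvPolynomial σ k) (GenericField k σ) (X i)) ∈ Q) : Q.IsMaximal := by
  algebraize [(aeval fun i => Ideal.Quotient.mkₐ k P (y i) :
    MvPolynomial σ k →ₐ[k] MvPolynomial ι k ⧸ P).toRingHom]
  have := isAlgebraic_of_isTranscendenceBasis hy rfl
  let ψ := Ideal.quotientMap Q _ hPQ
  have hcomp : ((Ideal.Quotient.mk Q).comp C).comp
      (algebraMap (MvPolynomial σ k) (GenericField k σ)) =
        ψ.comp (algebraMap (MvPolynomial σ k) (MvPolynomial ι k ⧸ P)) := by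
    refine MvPolynomial.ringHom_ext (fun c => ?_) fun i => ?_
    · have hc : algebraMap (MvPolynomial σ k) (GenericField k σ) (C c) = algebraMap k _ c :=
        (IsScalarTower.algebraMap_apply k (MvPolynomial σ k) (GenericField k σ) c).symm
      simp [ψ, RingHom.algebraMap_toAlgebra, hc]
    · simpa [ψ, RingHom.algebraMap_toAlgebra] using (Ideal.Quotient.eq.2 (hQ i)).symm
  refine isMaximal_of_forall_isIntegral_mk_X fun j => ?_
  have hj := (Algebra.IsAlgebraic.isAlgebraic (R := MvPolynomial σ k)
    (Ideal.Quotient.mk P (X j))).ringHom_of_comp_eq _ ψ (algebraMap_genericField_injective k σ)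
      hcomp
  simpa [ψ] using hj.isIntegral

lemma IsGenericPoint.ker_eval_mem_minimalPrimes [P.IsPrime] [Fintype σ] [Finite ι]
    (h : IsGenericPoint P y pt) (hdim : ringKrullDim (MvPolynomial ι k ⧸ P) = Fintype.card σ)
    {G : Set (MvPolynomial ι k)} (hP : P ∈ (Ideal.span G).minimalPrimes) :
    RingHom.ker (eval pt) ∈ (Ideal.span (map (algebraMap k (GenericField k σ)) '' G ∪
      range fun i => map (algebraMap k (GenericField k σ)) (y i) -
        C (algebraMap (MvPolynomial σ k) (GenericField k σ) (X i)))).minimalPrimes := by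
  have hev (f : MvPolynomial ι k) : eval pt (map (algebraMap k (GenericField k σ)) f) = 0 ↔
      f ∈ P := by
    rw [eval_map, ← aeval_def, ← RingHom.mem_ker, h.ker_aeval]
  refine ⟨⟨RingHom.ker_isPrime _, Ideal.span_le.2 ?_⟩, fun Q ⟨hQ, hle⟩ hker => ?_⟩
  · rintro _ (⟨g, hg, rfl⟩ | ⟨i, rfl⟩)
    · exact (hev g).2 (hP.1.2 (Ideal.subset_span hg))
    · simp [eval_map, ← aeval_def, h.aeval_eq]
  have hcomap : Q.comap (map (algebraMap k (GenericField k σ))) ≤ P := fun f hf =>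
    (hev f).1 (hker hf)
  have hPQ : P ≤ Q.comap (map (algebraMap k (GenericField k σ))) :=
    hP.2 ⟨hQ.comap _, Ideal.span_le.2 fun g hg => hle (Ideal.subset_span (.inl ⟨g, hg, rfl⟩))⟩
      hcomap
  have hmax : Q.IsMaximal := isMaximal_of_isTranscendenceBasis
    (isTranscendenceBasis_of_ringKrullDim_eq h.algebraicIndependent hdim) hPQ
    fun i => hle (Ideal.subset_span (.inr ⟨i, rfl⟩))
  exact (hmax.eq_of_le (RingHom.ker_ne_top _) hker).ge

end IsolatedGenericPoint

section RationalPoints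

variable {k A : Type*} [Field k] [CommRing A] [Algebra k A]

lemma isMaximal_ker_algHom (φ : A →ₐ[k] k) : (RingHom.ker φ).IsMaximal :=
  RingHom.ker_isMaximal_of_surjective φ fun c => ⟨algebraMap k A c, φ.commutes c⟩

lemma algHom_eq_of_ker_le {φ ψ : A →ₐ[k] k} (h : RingHom.ker φ ≤ RingHom.ker ψ) : φ = ψ := by
  ext a
  have ha : a - algebraMap k A (φ a) ∈ RingHom.ker φ := by simp
  have hψ := RingHom.mem_ker.1 (h ha)
  rw [map_sub, ψ.commutes, sub_eq_zero] at hψ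
  exact hψ.symm

lemma exists_apply_eq_ite_of_injective {ι : Type*} [Finite ι] [DecidableEq ι]
    {pt : ι → A →ₐ[k] k} (hpt : Function.Injective pt) :
    ∃ q : ι → A, ∀ i j, pt i (q j) = if j = i then 1 else 0 := by
  have hcop : Pairwise (Function.onFun IsCoprime fun i => RingHom.ker (pt i)) := fun i j hij =>
    Ideal.isCoprime_iff_sup_eq.2 <| (isMaximal_ker_algHom (pt i)).coprime_of_ne
      (isMaximal_ker_algHom (pt j)) fun h => hij (hpt (algHom_eq_of_ker_le h.le))
  choose q hq using fun j => Ideal.exists_forall_sub_mem_ideal hcop fun i => if j = i then 1 else 0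
  refine ⟨q, fun i j => ?_⟩
  have := RingHom.mem_ker.1 (hq j i)
  rwa [map_sub, sub_eq_zero, apply_ite (pt i), map_one, map_zero] at this

lemma exists_ker_algHom_eq [IsAlgClosed k] [Algebra.FiniteType k A] (M : Ideal A)
    [M.IsMaximal] : ∃ φ : A →ₐ[k] k, RingHom.ker φ = M := by
  let := Ideal.Quotient.field M
  have := finite_of_finite_type_of_isJacobsonRing k (A ⧸ M)
  let e : k ≃ₐ[k] A ⧸ M :=
    .ofBijective (Algebra.ofId k (A ⧸ M)) IsAlgClosed.algebraMap_bijective_of_isIntegral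
  refine ⟨e.symm.toAlgHom.comp (Ideal.Quotient.mkₐ k M), ?_⟩
  ext a
  simp [RingHom.mem_ker, Ideal.Quotient.eq_zero_iff_mem]

lemma isMaximal_of_finite_isMaximal {R : Type*} [CommRing R] [IsJacobsonRing R] {I P : Ideal R}
    [hP : P.IsPrime] (hI : {M : Ideal R | M.IsMaximal ∧ I ≤ M}.Finite) (hIP : I ≤ P) :
    P.IsMaximal := by
  have hfin : {M : Ideal R | P ≤ M ∧ M.IsMaximal}.Finite :=
    hI.subset fun M hM => ⟨hM.2, hIP.trans hM.1⟩
  have hle : hfin.toFinset.inf id ≤ P := by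
    conv_rhs => rw [← IsJacobsonRing.out inferInstance hP.isRadical]
    rw [Finset.inf_id_eq_sInf, hfin.coe_toFinset]
    rfl
  obtain ⟨M, hM, hMP⟩ := hP.inf_le'.1 hle
  obtain ⟨hPM, hmax⟩ := hfin.mem_toFinset.1 hM
  exact le_antisymm hPM hMP ▸ hmax

variable {σ : Type*} {y : σ → A}

lemma ker_mem_minimalPrimes_of_finite [IsAlgClosed k] [Algebra.FiniteType k A]
    (hfin : {φ : A →ₐ[k] k | ∀ i, φ (y i) = 0}.Finite) {φ : A →ₐ[k] k}
    (hφ : ∀ i, φ (y i) = 0) : RingHom.ker φ ∈ (Ideal.span (range y)).minimalPrimes := by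
  have hmax : {M : Ideal A | M.IsMaximal ∧ Ideal.span (range y) ≤ M}.Finite := by
    refine (hfin.image fun φ => RingHom.ker φ).subset fun M ⟨hM, hle⟩ => ?_
    obtain ⟨ψ, rfl⟩ := exists_ker_algHom_eq (k := k) M
    exact ⟨ψ, fun i => hle (Ideal.subset_span (mem_range_self i)), rfl⟩
  refine ⟨⟨RingHom.ker_isPrime φ, Ideal.span_le.2 (forall_mem_range.2 hφ)⟩,
    fun Q ⟨hQ, hle⟩ hQφ => ?_⟩
  have : IsJacobsonRing A := isJacobsonRing_of_finiteType (A := k)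
  have := isMaximal_of_finite_isMaximal hmax hle
  exact (this.eq_of_le (RingHom.ker_ne_top φ) hQφ).ge

variable [IsDomain A] [Algebra.FiniteType k A]

lemma exists_linearIndependentOver_of_finite [IsAlgClosed k] [Fintype σ] [Nonempty σ]
    (hdim : ringKrullDim A = Fintype.card σ) (hfin : {φ : A →ₐ[k] k | ∀ i, φ (y i) = 0}.Finite)
    {m : ℕ} {pt : Fin m → A →ₐ[k] k} (hpt : Function.Injective pt)
    (hpt0 : ∀ i j, pt i (y j) = 0) : ∃ q : Fin m → A, LinearIndependentOver k y q := by
  have := Algebra.FiniteType.isNoetherianRing k A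
  obtain ⟨q, hq⟩ := exists_apply_eq_ite_of_injective hpt
  refine ⟨q, linearIndependentOver_of_mem_minimalPrimes
    (fun i => ker_mem_minimalPrimes_of_finite hfin (hpt0 i)) (fun i => ?_) hq⟩
  have := isMaximal_ker_algHom (pt i)
  have := height_eq_ringKrullDim_of_isMaximal (k := k) (RingHom.ker (pt i))
  rw [hdim] at this
  exact_mod_cast this.ge

lemma exists_mem_span_finite_algHom [Infinite k] {d : ℕ} (hdim : ringKrullDim A = d) {G : Set A}
    (hG : ∀ Q : Ideal A, Q.IsPrime → G ⊆ Q → Q.IsMaximal) :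
    ∃ f : Fin d → A, (∀ i, f i ∈ Submodule.span k G) ∧
      {φ : A →ₐ[k] k | ∀ i, φ (f i) = 0}.Finite := by
  have := Algebra.FiniteType.isNoetherianRing k A
  obtain ⟨f, hfG, hf⟩ := exists_fin_forall_le_height (k := k) G d
  refine ⟨f, hfG, ?_⟩
  have hmax (Q : Ideal A) (hQ : Q.IsPrime) (hle : Ideal.span (range f) ≤ Q) : Q.IsMaximal := by
    by_cases hGQ : G ⊆ Q
    · exact hG Q hQ hGQ
    · obtain ⟨M, hM, hQM⟩ := Q.exists_le_maximal hQ.ne_top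
      have hMd : M.height = d := by
        have := height_eq_ringKrullDim_of_isMaximal (k := k) M
        rw [hdim] at this
        exact_mod_cast this
      rcases hQM.eq_or_lt with rfl | hlt
      · exact hM
      · have hlt' := Ideal.height_strict_mono_of_isPrime_of_isPrime hlt
        exact absurd (hf Q hQ hle hGQ) (hMd ▸ hlt').not_ge
  refine ((Ideal.span (range f)).finite_minimalPrimes_of_isNoetherianRing A).preimage
    (f := fun φ : A →ₐ[k] k => RingHom.ker φ)
    (fun φ _ ψ _ h => algHom_eq_of_ker_le h.le) |>.subset fun φ hφ => ?_
  refine ⟨⟨RingHom.ker_isPrime φ, Ideal.span_le.2 (forall_mem_range.2 hφ)⟩, fun Q hQ hQφ => ?_⟩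
  exact ((hmax Q hQ.1 hQ.2).eq_of_le (RingHom.ker_ne_top φ) hQφ).ge

end RationalPoints

section AffineSubspace

variable {k : Type*} [Field k] {ι : Type*} [Fintype ι]

lemma exists_mem_affineSubspace_iff_affineForm_eq_zero {L : AffineSubspace k (ι → k)}
    (hL : (L : Set (ι → k)).Nonempty) {d : ℕ}
    (hd : Module.finrank k L.direction + d = Fintype.card ι) :
    ∃ a : Fin d → Option ι → k, ∀ x, x ∈ L ↔ ∀ i, affineForm (a i) x = 0 := by
  classical
  obtain ⟨p, hp⟩ := hL
  have hrank : Module.finrank k ((ι → k) ⧸ L.direction) = Module.finrank k (Fin d → k) := by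
    have := L.direction.finrank_quotient_add_finrank
    rw [Module.finrank_fintype_fun_eq_card] at this
    rw [Module.finrank_fin_fun]
    lia
  let f : (ι → k) →ₗ[k] Fin d → k :=
    (LinearEquiv.ofFinrankEq _ _ hrank).toLinearMap ∘ₗ L.direction.mkQ
  have hf (v : ι → k) : v ∈ L.direction ↔ f v = 0 := by simp [f]
  refine ⟨fun i o => o.elim (-f p i) fun j => LinearMap.toMatrix' f i j, fun x => ?_⟩
  have hform (i : Fin d) : -f p i + (LinearMap.toMatrix' f).mulVec x i = f (x - p) i := by
    rw [LinearMap.toMatrix'_mulVec, map_sub, Pi.sub_apply, neg_add_eq_sub]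
  rw [← L.vsub_right_mem_direction_iff_mem hp, vsub_eq_sub, hf, _root_.funext_iff]
  exact forall_congr' fun i => by rw [← hform]; rfl

lemma exists_submodule_finrank_eq_forall_dotProduct_eq_zero {d e : ℕ}
    (he : e + d ≤ Fintype.card ι) (a : Fin d → ι → k) :
    ∃ D : Submodule k (ι → k), Module.finrank k D = e ∧ ∀ v ∈ D, ∀ i, a i ⬝ᵥ v = 0 := by
  have hle : e ≤ Module.finrank k (Matrix.of a).mulVecLin.ker := by
    have hsum := (Matrix.of a).mulVecLin.finrank_range_add_finrank_ker
    have hrange := (Matrix.of a).mulVecLin.range.finrank_le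
    rw [Module.finrank_fintype_fun_eq_card] at hsum
    rw [Module.finrank_fin_fun] at hrange
    lia
  obtain ⟨v, hv⟩ := exists_linearIndependent_of_le_finrank hle
  refine ⟨Submodule.span k (range ((Matrix.of a).mulVecLin.ker.subtype ∘ v)), ?_, fun w hw => ?_⟩
  · rw [finrank_span_eq_card (hv.map' _ (Submodule.ker_subtype _)), Fintype.card_fin]
  · have hker : w ∈ (Matrix.of a).mulVecLin.ker :=
      Submodule.span_le.2 (range_subset_iff.2 fun i => (v i).2) hw
    exact congrFun (LinearMap.mem_ker.1 hker)

end AffineSubspace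

section LinearSections

/-- The ring of polynomial functions on `W`. -/
abbrev CoordinateRing (W : Set (Fin n → ℂ)) : Type :=
  MvPolynomial (Fin n) ℂ ⧸ vanishingIdeal n W

/-- The coordinate functions on `W`. -/
def coordinates (W : Set (Fin n → ℂ)) : Fin n → CoordinateRing n W :=
  Ideal.Quotient.mkₐ ℂ (vanishingIdeal n W) ∘ X

/-- `m` is the number of points of some finite section of `W` by an affine subspace of
codimension `d`. -/
def IsSectionCard (W : Set (Fin n → ℂ)) (d m : ℕ) : Prop :=
  ∃ L : AffineSubspace ℂ (Fin n → ℂ),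
    Module.finrank ℂ L.direction = n - d ∧ (W ∩ ↑L).Finite ∧ (W ∩ ↑L).ncard = m

variable {n} {V W : Set (Fin n → ℂ)} {d : ℕ}

lemma aeval_comp_coordinates (φ : CoordinateRing n W →ₐ[ℂ] ℂ) (f : MvPolynomial (Fin n) ℂ) :
    aeval (φ ∘ coordinates n W) f = φ (Ideal.Quotient.mkₐ ℂ (vanishingIdeal n W) f) :=
  DFunLike.congr_fun (aeval_unique (φ.comp (Ideal.Quotient.mkₐ ℂ (vanishingIdeal n W)))).symm f

lemma IsAlgebraicSet.comp_coordinates_mem (hW : IsAlgebraicSet n W)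
    (φ : CoordinateRing n W →ₐ[ℂ] ℂ) : φ ∘ coordinates n W ∈ W := by
  refine hW.zeroLocus_vanishingIdeal.subset fun f hf => ?_
  rw [← aeval_eq_eval, aeval_comp_coordinates, Ideal.Quotient.mkₐ_eq_mk,
    Ideal.Quotient.eq_zero_iff_mem.2 hf, map_zero]

/-- The points of an algebraic set, as `ℂ`-algebra homomorphisms from its coordinate ring. -/
def IsAlgebraicSet.pointEquiv (hW : IsAlgebraicSet n W) :
    W ≃ (CoordinateRing n W →ₐ[ℂ] ℂ) where
  toFun x := Ideal.Quotient.liftₐ (vanishingIdeal n W) (aeval x.1) fun f hf => hf x.1 x.2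
  invFun φ := ⟨φ ∘ coordinates n W, hW.comp_coordinates_mem φ⟩
  left_inv x := by
    ext j
    change aeval x.1 (X j) = x.1 j
    rw [aeval_X]
  right_inv φ := AlgHom.ext <| (Ideal.Quotient.mkₐ_surjective ℂ (vanishingIdeal n W)).forall.2
    fun f => aeval_comp_coordinates φ f

lemma IsAlgebraicSet.pointEquiv_affineForm (hW : IsAlgebraicSet n W) (x : W)
    (a : Option (Fin n) → ℂ) :
    hW.pointEquiv x (affineForm (algebraMap ℂ _ ∘ a) (coordinates n W)) = affineForm a x.1 := by
  rw [map_affineForm]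
  congr! 1
  · exact funext fun o => (hW.pointEquiv x).commutes (a o)
  · exact congrArg Subtype.val (hW.pointEquiv.symm_apply_apply x)

lemma IsIrredVariety.dim_le (hW : IsIrredVariety n W) : dim n W ≤ n := by
  have h := ringKrullDim_quotient_le (vanishingIdeal n W)
  rw [hW.ringKrullDim_eq_dim, MvPolynomial.ringKrullDim_of_isNoetherianRing,
    ringKrullDim_eq_zero_of_field, zero_add, Nat.card_fin] at h
  exact_mod_cast h

lemma IsIrredVariety.exists_linearIndependentOver (hW : IsIrredVariety n W) (hd : 1 ≤ d)
    (hdim : dim n W = d) {m : ℕ} (hm : IsSectionCard n W d m) :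
    ∃ (a : Fin d → Option (Fin n) → ℂ) (q : Fin m → CoordinateRing n W),
      LinearIndependentOver ℂ
        (fun i => affineForm (algebraMap ℂ _ ∘ a i) (coordinates n W)) q := by
  obtain ⟨L, hL, hfin, rfl⟩ := hm
  subst hdim
  rcases (W ∩ ↑L).eq_empty_or_nonempty with hempty | hne
  · rw [hempty, ncard_empty]
    exact ⟨0, isEmptyElim, fun Φ _ => Subsingleton.elim _ _⟩
  have := hW.isPrime_vanishingIdeal
  have : NeZero (dim n W) := ⟨by lia⟩
  obtain ⟨a, ha⟩ := exists_mem_affineSubspace_iff_affineForm_eq_zero (hne.mono inter_subset_right)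
    (d := dim n W) (by rw [hL, Fintype.card_fin, Nat.sub_add_cancel hW.dim_le])
  have hfibre (x : W) : x.1 ∈ L ↔ ∀ i, hW.1.pointEquiv x
      (affineForm (algebraMap ℂ _ ∘ a i) (coordinates n W)) = 0 := by
    simp only [ha, hW.1.pointEquiv_affineForm]
  have := hfin.to_subtype
  let e : (W ∩ ↑L : Set (Fin n → ℂ)) ≃ Fin (W ∩ ↑L).ncard :=
    Finite.equivFinOfCardEq (Nat.card_coe_set_eq _)
  let pt (i : Fin (W ∩ ↑L).ncard) : CoordinateRing n W →ₐ[ℂ] ℂ :=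
    hW.1.pointEquiv ⟨(e.symm i).1, (e.symm i).2.1⟩
  have hpt : Function.Injective pt := fun i j h =>
    e.symm.injective (Subtype.ext (Subtype.mk.inj (hW.1.pointEquiv.injective h)))
  refine ⟨a, exists_linearIndependentOver_of_finite (by simpa using hW.ringKrullDim_eq_dim) ?_ hpt
    fun i => (hfibre _).1 (e.symm i).2.2⟩
  refine (hfin.preimage (f := fun φ => (hW.1.pointEquiv.symm φ).1)
    (Subtype.val_injective.comp hW.1.pointEquiv.symm.injective).injOn).subset fun φ hφ => ?_
  exact ⟨(hW.1.pointEquiv.symm φ).2, (hfibre _).2 (by simpa using hφ)⟩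

lemma isMaximal_of_forall_coordinates_sub_mem (p : Fin n → ℂ) {Q : Ideal (CoordinateRing n W)}
    [Q.IsPrime] (hQ : ∀ j, coordinates n W j - algebraMap ℂ _ (p j) ∈ Q) : Q.IsMaximal := by
  have hcomap : (Q.comap (Ideal.Quotient.mk (vanishingIdeal n W))).IsMaximal := by
    refine isMaximal_of_forall_isIntegral_mk_X fun j => ?_
    have hj : Ideal.Quotient.mk (Q.comap (Ideal.Quotient.mk (vanishingIdeal n W))) (X j) =
        algebraMap ℂ _ (p j) := Ideal.Quotient.eq.2 (hQ j)
    rw [hj]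
    exact isIntegral_algebraMap
  have hmk := Ideal.Quotient.mk_surjective (I := vanishingIdeal n W)
  rw [← Ideal.map_comap_of_surjective _ hmk Q]
  exact hcomap.map_of_surjective_of_ker_le hmk (Ideal.ker_le_comap _)

lemma IsIrredVariety.exists_isSectionCard_pos (hW : IsIrredVariety n W) :
    ∃ m, 1 ≤ m ∧ IsSectionCard n W (dim n W) m := by
  have := hW.isPrime_vanishingIdeal
  obtain ⟨p, hp⟩ := hW.2.1
  obtain ⟨f, hf, hfin⟩ := exists_mem_span_finite_algHom (k := ℂ) hW.ringKrullDim_eq_dim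
    (G := range fun j => coordinates n W j - algebraMap ℂ _ (p j)) fun Q hQ hG =>
      isMaximal_of_forall_coordinates_sub_mem p (range_subset_iff.1 hG)
  choose a ha using fun i => (Submodule.mem_span_range_iff_exists_fun ℂ).1 (hf i)
  obtain ⟨D, hD, hDa⟩ := exists_submodule_finrank_eq_forall_dotProduct_eq_zero (e := n - dim n W)
    (d := dim n W) (by rw [Fintype.card_fin, Nat.sub_add_cancel hW.dim_le]) a
  have hpL : p ∈ AffineSubspace.mk' p D := AffineSubspace.self_mem_mk' p D
  have hsec : (W ∩ ↑(AffineSubspace.mk' p D)).Finite := by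
    refine (hfin.image fun φ => (hW.1.pointEquiv.symm φ).1).subset fun x ⟨hxW, hxL⟩ => ?_
    refine ⟨hW.1.pointEquiv ⟨x, hxW⟩, fun i => ?_, by simp⟩
    have hcoord (j : Fin n) : hW.1.pointEquiv ⟨x, hxW⟩ (coordinates n W j) = x j :=
      congrFun (congrArg Subtype.val (hW.1.pointEquiv.symm_apply_apply ⟨x, hxW⟩)) j
    rw [← ha i]
    simpa [hcoord, dotProduct] using hDa _ ((AffineSubspace.mem_mk'.1 hxL)) i
  exact ⟨_, (ncard_pos hsec).2 ⟨p, hp, hpL⟩, _, by rwa [AffineSubspace.direction_mk'], hsec, rfl⟩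

end LinearSections

section CommonSections

variable {n} {V : Set (Fin n → ℂ)} {d : ℕ}

lemma exists_forall_linearIndependentOver_of_isSectionCard (hd : 1 ≤ d) {κ : Type*} [Countable κ]
    {W : κ → Set (Fin n → ℂ)} (hW : ∀ c, IsIrredVariety n (W c)) (hdim : ∀ c, dim n (W c) = d)
    {m : κ → ℕ} (hm : ∀ c, IsSectionCard n (W c) d (m c)) :
    ∃ a : Fin d → Option (Fin n) → ℂ, ∀ c, ∃ q : Fin (m c) → CoordinateRing n (W c),
      LinearIndependentOver ℂ
        (fun i => affineForm (algebraMap ℂ _ ∘ a i) (coordinates n (W c))) q := by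
  have : Uncountable ℂ := not_countable_univ_iff.1 not_countable_complex
  choose a q hq using fun c => (hW c).exists_linearIndependentOver hd (hdim c) (hm c)
  obtain ⟨b, hb⟩ := exists_forall_linearIndependentOver_affineForm
    (fun c => coordinates n (W c)) q fun c => ⟨a c, hq c⟩
  exact ⟨b, fun c => ⟨q c, hb c⟩⟩

lemma IsIrredVariety.isSectionCard_degree {W : Set (Fin n → ℂ)} (hW : IsIrredVariety n W)
    (hd : 1 ≤ dim n W) : IsSectionCard n W (dim n W) (degree n W) ∧ 1 ≤ degree n W := by
  have := hW.isPrime_vanishingIdeal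
  obtain ⟨a, ha⟩ := exists_forall_linearIndependentOver_of_isSectionCard hd
    (κ := {m // IsSectionCard n W (dim n W) m}) (fun _ => hW) (fun _ => rfl) Subtype.prop
  obtain ⟨r, hr⟩ := exists_forall_linearIndependentOver_imp_le (k := ℂ) (σ := Fin (dim n W))
    (y := fun i => affineForm (algebraMap ℂ _ ∘ a i) (coordinates n W))
    (by simpa using hW.ringKrullDim_eq_dim)
  have hbdd : BddAbove {m | IsSectionCard n W (dim n W) m} :=
    ⟨r, fun m hm => (ha ⟨m, hm⟩).elim (hr m)⟩
  obtain ⟨m, hm, hsec⟩ := hW.exists_isSectionCard_pos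
  exact ⟨Nat.sSup_mem ⟨m, hsec⟩ hbdd, hm.trans (le_csSup hbdd hsec)⟩

lemma IsAlgSetOfDim.exists_forall_linearIndependentOver (hV : IsAlgSetOfDim n V d) (hd : 1 ≤ d) :
    ∃ a : Fin d → Option (Fin n) → ℂ, ∀ W : {W | IsIrredComponent n W V},
      ∃ q : Fin (degree n W.1) → CoordinateRing n W.1, LinearIndependentOver ℂ
        (fun i => affineForm (algebraMap ℂ _ ∘ a i) (coordinates n W.1)) q := by
  have := hV.1.finite_isIrredComponent.to_subtype
  have hdim (W : {W | IsIrredComponent n W V}) : dim n W.1 = d := hV.2.2 W.1 W.2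
  exact exists_forall_linearIndependentOver_of_isSectionCard hd (fun W => W.2.1) hdim fun W =>
    hdim W ▸ (W.2.1.isSectionCard_degree (hd.trans_eq (hdim W).symm)).1

lemma degreeSum_eq_sum [Fintype {W | IsIrredComponent n W V}] :
    degreeSum n V = ∑ W : {W | IsIrredComponent n W V}, degree n W.1 := by
  rw [degreeSum, ← finsum_set_coe_eq_finsum_mem, finsum_eq_sum_of_fintype]

lemma IsAlgSetOfDim.degreeSum_pos (hV : IsAlgSetOfDim n V d) (hd : 1 ≤ d) :
    0 < degreeSum n V := by
  have := hV.1.finite_isIrredComponent.fintype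
  obtain ⟨W, hW⟩ := hV.1.exists_isIrredComponent hV.2.1
  rw [degreeSum_eq_sum]
  exact Finset.sum_pos' (fun _ _ => Nat.zero_le _) ⟨⟨W, hW⟩, Finset.mem_univ _,
    (hW.1.isSectionCard_degree (by rwa [hV.2.2 W hW])).2⟩

end CommonSections

section Evaluation

variable {k Ω : Type*} [Field k] [Field Ω] [Algebra k Ω] {ι T : Type*}

lemma totalDegree_map_le {R S : Type*} [CommSemiring R] [CommSemiring S] (φ : R →+* S)
    (f : MvPolynomial ι R) : (map φ f).totalDegree ≤ f.totalDegree :=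
  Finset.sup_mono (support_map_subset φ f)

lemma totalDegree_aeval_monomial_le {R σ : Type*} [CommRing R] {y : σ → MvPolynomial ι R}
    (hy : ∀ i, (y i).totalDegree ≤ 1) (m : σ →₀ ℕ) :
    (aeval y (monomial m (1 : R))).totalDegree ≤ m.sum fun _ e => e := by
  rw [aeval_monomial, map_one, one_mul, Finsupp.prod]
  refine (totalDegree_finsetProd _ _).trans (Finset.sum_le_sum fun i _ => ?_)
  exact (totalDegree_pow _ _).trans ((Nat.mul_le_mul_left _ (hy i)).trans_eq (mul_one _))

lemma eval_mem_span_range_aeval (pt : T → ι → Ω) {K : ℕ} {f : MvPolynomial ι Ω}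
    (hf : f.totalDegree ≤ K) :
    (fun t => eval (pt t) f) ∈ Submodule.span Ω
      ((fun g t => aeval (pt t) g) '' {g : MvPolynomial ι k | g.totalDegree ≤ K}) := by
  have hsum : (fun t => eval (pt t) f) =
      ∑ m ∈ f.support, coeff m f • fun t => aeval (pt t) (monomial m (1 : k)) := by
    ext t
    conv_lhs => rw [f.as_sum, map_sum]
    simp [eval_monomial, aeval_monomial]
  rw [hsum]
  refine Submodule.sum_mem _ fun m hm => Submodule.smul_mem _ _ (Submodule.subset_span ?_)
  exact ⟨_, (totalDegree_monomial_le _ _).trans ((le_totalDegree hm).trans hf), rfl⟩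

variable [Fintype T]

lemma exists_linearIndependent_aeval_of_separating {pt : T → ι → Ω} {K : ℕ}
    (h : ∀ t, ∃ f : MvPolynomial ι Ω, f.totalDegree ≤ K ∧ eval (pt t) f = 1 ∧
      ∀ s, s ≠ t → eval (pt s) f = 0) :
    ∃ f : Fin (Fintype.card T) → MvPolynomial ι k, (∀ i, (f i).totalDegree ≤ K) ∧
      LinearIndependent Ω fun i t => aeval (pt t) (f i) := by
  classical
  set E : Set (T → Ω) := (fun g t => aeval (pt t) g) '' {g : MvPolynomial ι k | g.totalDegree ≤ K}
  have hspan : Submodule.span Ω E = ⊤ := by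
    rw [eq_top_iff, ← (Pi.basisFun Ω T).span_eq, Submodule.span_le, range_subset_iff]
    intro t
    obtain ⟨f, hfK, hft, hfs⟩ := h t
    have hsingle : Pi.basisFun Ω T t = fun s => eval (pt s) f := by
      ext s
      rcases eq_or_ne s t with rfl | hst
      · simp [hft]
      · simp [hfs s hst, hst]
    rw [hsingle]
    exact eval_mem_span_range_aeval pt hfK
  obtain ⟨v, hvE, -, hv⟩ := Submodule.exists_fun_fin_finrank_span_eq Ω E
  have hcard : Module.finrank Ω (Submodule.span Ω E) = Fintype.card T := by
    rw [hspan, finrank_top, Module.finrank_fintype_fun_eq_card]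
  choose f hfK hf using hvE
  refine ⟨f ∘ Fin.cast hcard.symm, fun i => hfK _, ?_⟩
  obtain rfl : (fun i t => aeval (pt t) (f i)) = v := funext hf
  exact hv.comp _ (Fin.cast_injective hcard.symm)

end Evaluation

section Hilbert

variable {n} {V : Set (Fin n → ℂ)} {d : ℕ}

lemma card_le_hilbert {B : Type*} [CommRing B] [Algebra ℂ B] {E : MvPolynomial (Fin n) ℂ →ₐ[ℂ] B}
    (hE : vanishingIdeal n V ≤ RingHom.ker E) {ι : Type*} [Fintype ι]
    {f : ι → MvPolynomial (Fin n) ℂ} {m : ℕ} (hf : ∀ i, (f i).totalDegree ≤ m)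
    (hli : LinearIndependent ℂ fun i => E (f i)) : Fintype.card ι ≤ hilbert n V m := by
  have hquot : LinearIndependent ℂ fun i => Ideal.Quotient.mkₐ ℂ (vanishingIdeal n V) (f i) :=
    .of_comp (Ideal.Quotient.liftₐ (vanishingIdeal n V) E hE).toLinearMap hli
  rw [← finrank_span_eq_card hquot]
  refine Submodule.finrank_mono (Submodule.span_le.2 (range_subset_iff.2 fun i => ?_))
  exact Submodule.mem_map_of_mem ((mem_restrictTotalDegree _ _ _).2 (hf i))

lemma card_mul_pow_le_hilbert {Ω B : Type*} [Field Ω] [Algebra ℂ Ω] [CommRing B] [Algebra ℂ B]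
    [Algebra Ω B] [IsScalarTower ℂ Ω B] {E : MvPolynomial (Fin n) ℂ →ₐ[ℂ] B}
    (hE : vanishingIdeal n V ≤ RingHom.ker E) {y : Fin d → MvPolynomial (Fin n) ℂ}
    (hy : ∀ i, (y i).totalDegree ≤ 1) {Y : Fin d → Ω} (hY : AlgebraicIndependent ℂ Y)
    (hEy : ∀ i, E (y i) = algebraMap Ω B (Y i)) {ι : Type*} [Fintype ι]
    {f : ι → MvPolynomial (Fin n) ℂ} {K : ℕ} (hf : ∀ i, (f i).totalDegree ≤ K)
    (hli : LinearIndependent Ω fun i => E (f i)) (M : ℕ) :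
    Fintype.card ι * (M + 1) ^ d ≤ hilbert n V (K + d * M) := by
  let e (b : Fin d → Fin (M + 1)) : Fin d →₀ ℕ := Finsupp.equivFunOnFinite.symm fun i => b i
  have he : Function.Injective e := fun b c h =>
    funext fun i => Fin.ext (DFunLike.congr_fun h i)
  have hmon : LinearIndependent ℂ fun b => aeval Y (monomial (e b) (1 : ℂ)) :=
    (((basisMonomials (Fin d) ℂ).linearIndependent.map' (aeval Y).toLinearMap
      (LinearMap.ker_eq_bot.2 hY)).comp e he :)
  have hEy' (g : MvPolynomial (Fin d) ℂ) : E (aeval y g) = algebraMap Ω B (aeval Y g) := by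
    rw [← aeval_algebraMap_apply, comp_aeval_apply]
    exact congrArg (fun z => aeval z g) (funext hEy)
  have hprod : LinearIndependent ℂ fun p : (Fin d → Fin (M + 1)) × ι =>
      E (aeval y (monomial (e p.1) (1 : ℂ)) * f p.2) := by
    simpa only [map_mul, hEy', Algebra.smul_def] using linearIndependent_smul hmon hli
  have hdeg (p : (Fin d → Fin (M + 1)) × ι) :
      (aeval y (monomial (e p.1) (1 : ℂ)) * f p.2).totalDegree ≤ K + d * M := by
    have hsum : ((e p.1).sum fun _ a => a) ≤ d * M := by
      rw [Finsupp.sum_fintype _ _ fun _ => rfl]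
      exact (Finset.sum_le_card_nsmul _ _ M fun i _ => Nat.lt_succ_iff.1 (p.1 i).2).trans_eq
        (by simp)
    rw [add_comm K]
    exact (totalDegree_mul _ _).trans
      (add_le_add ((totalDegree_aeval_monomial_le hy _).trans hsum) (hf _))
  simpa [mul_comm] using card_le_hilbert hE hdeg hprod

end Hilbert

section Siegel

/-- The index set of a family of `deg V` generic points, `deg W` on each component `W` of `V`. -/
abbrev GenericIndex (V : Set (Fin n → ℂ)) : Type :=
  (W : {W | IsIrredComponent n W V}) × Fin (degree n W.1)

variable {n} {V : Set (Fin n → ℂ)} {d : ℕ}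

lemma IsAlgSetOfDim.exists_injective_isGenericPoint (hV : IsAlgSetOfDim n V d) (hd : 1 ≤ d) :
    ∃ (y : Fin d → MvPolynomial (Fin n) ℂ)
      (pt : GenericIndex n V → Fin n → GenericField ℂ (Fin d)),
      (∀ i, (y i).totalDegree ≤ 1) ∧ Function.Injective pt ∧
        ∀ t, IsGenericPoint (vanishingIdeal n t.1.1) y (pt t) := by
  obtain ⟨a, ha⟩ := hV.exists_forall_linearIndependentOver hd
  have hpt (W : {W | IsIrredComponent n W V}) :
      ∃ pt : Fin (degree n W.1) → Fin n → GenericField ℂ (Fin d), Function.Injective pt ∧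
        ∀ i, IsGenericPoint (vanishingIdeal n W.1) (fun i => affineForm (C ∘ a i) X) (pt i) := by
    have := W.2.1.isPrime_vanishingIdeal
    obtain ⟨q, hq⟩ := ha W
    have hdim := W.2.1.ringKrullDim_eq_dim
    rw [hV.2.2 W.1 W.2] at hdim
    refine Paper.exists_injective_isGenericPoint (by simpa using hdim) (q := q) ?_
    simp only [map_affineForm]
    exact hq
  choose pt hinj hpt using hpt
  refine ⟨_, fun t => pt t.1 t.2, fun i => totalDegree_affineForm_le (a i), ?_,
    fun t => hpt t.1 t.2⟩
  rintro ⟨W, i⟩ ⟨W', i'⟩ h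
  obtain rfl : W = W' := Subtype.ext <| by
    rw [← W.2.1.1.zeroLocus_vanishingIdeal, ← W'.2.1.1.zeroLocus_vanishingIdeal,
      ← (hpt W i).ker_aeval, ← (hpt W' i').ker_aeval]
    exact congrArg (fun z => zeroLocus n (RingHom.ker (aeval z : MvPolynomial (Fin n) ℂ →ₐ[ℂ] _))) h
  exact congrArg _ (hinj W h)

lemma exists_separating_of_isGenericPoint {k ι σ T : Type*} [Field k] [Fintype ι] [Fintype σ]
    {P : T → Ideal (MvPolynomial ι k)} [∀ t, (P t).IsPrime]
    (hdim : ∀ t, ringKrullDim (MvPolynomial ι k ⧸ P t) = Fintype.card σ)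
    {y : σ → MvPolynomial ι k} {δ : ℕ} (hy : ∀ i, (y i).totalDegree ≤ 1)
    {G : Set (MvPolynomial ι k)} (hG : ∀ g ∈ G, g.totalDegree ≤ δ)
    (hP : ∀ t, P t ∈ (Ideal.span G).minimalPrimes)
    {pt : T → ι → GenericField k σ} (hinj : Function.Injective pt)
    (hpt : ∀ t, IsGenericPoint (P t) y (pt t)) (t : T) :
    ∃ f : MvPolynomial ι (GenericField k σ), f.totalDegree ≤ Fintype.card ι * δ ∧
      eval (pt t) f = 1 ∧ ∀ s, s ≠ t → eval (pt s) f = 0 := by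
  have hmin (s : T) := (hpt s).ker_eval_mem_minimalPrimes (hdim s) (hP s)
  obtain ⟨f, hfdeg, hft, hf⟩ := exists_separating_of_mem_minimalPrimes_span (δ := max δ 1) (by
    rintro _ (⟨g, hg, rfl⟩ | ⟨i, rfl⟩)
    · exact (totalDegree_map_le _ g).trans ((hG g hg).trans (le_max_left _ _))
    · exact (totalDegree_sub_C_le _ _).trans
        ((totalDegree_map_le _ (y i)).trans ((hy i).trans (le_max_right _ _)))) (hmin t)
  exact ⟨f, hfdeg.trans (Nat.mul_le_mul_left _ (by lia)), hft, fun s hs =>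
    hf _ (fun g hg => (hmin s).1.2 (Ideal.subset_span hg)) (hinj.ne hs)⟩

lemma IsAlgSetOfDim.degreeSum_mul_pow_le_hilbert (hV : IsAlgSetOfDim n V d) (hd : 1 ≤ d)
    {G : Set (MvPolynomial (Fin n) ℂ)} {δ : ℕ} (hG : ∀ g ∈ G, g.totalDegree ≤ δ)
    (hGV : ∀ W, IsIrredComponent n W V → IsIrredComponent n W (zeroLocus n G)) (M : ℕ) :
    degreeSum n V * (M + 1) ^ d ≤ hilbert n V (n * δ + d * M) := by
  have := hV.1.finite_isIrredComponent.fintype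
  obtain ⟨y, pt, hy, hinj, hpt⟩ := hV.exists_injective_isGenericPoint hd
  have (t : GenericIndex n V) : (vanishingIdeal n t.1.1).IsPrime :=
    t.1.2.1.isPrime_vanishingIdeal
  have hdim (t : GenericIndex n V) :
      ringKrullDim (CoordinateRing n t.1.1) = Fintype.card (Fin d) := by
    rw [t.1.2.1.ringKrullDim_eq_dim, hV.2.2 _ t.1.2, Fintype.card_fin]
  have hsep := exists_separating_of_isGenericPoint hdim hy hG
    (fun t => (isIrredComponent_zeroLocus_iff.1 (hGV _ t.1.2)).2) hinj hpt
  rw [Fintype.card_fin] at hsep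
  obtain ⟨f, hf, hli⟩ := exists_linearIndependent_aeval_of_separating (k := ℂ) hsep
  have hcard : Fintype.card (GenericIndex n V) = degreeSum n V := by
    simp only [Fintype.card_sigma, Fintype.card_fin, degreeSum_eq_sum]
  let E : MvPolynomial (Fin n) ℂ →ₐ[ℂ] GenericIndex n V → GenericField ℂ (Fin d) :=
    AlgHom.pi fun t => aeval (pt t)
  have hE : vanishingIdeal n V ≤ RingHom.ker E := fun g hg => _root_.funext fun t => by
    have hgt : g ∈ vanishingIdeal n t.1.1 := fun x hx => hg x (t.1.2.2.1 hx)
    rwa [← (hpt t).ker_aeval, RingHom.mem_ker] at hgt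
  simpa only [Fintype.card_fin, hcard] using card_mul_pow_le_hilbert hE hy
    algebraicIndependent_algebraMap_X (fun i => _root_.funext fun t => (hpt t).aeval_eq i) hf hli M

lemma exists_eval_eq_zero_of_card_lt_hilbert {m : ℕ} {S : Finset (Fin n → ℂ)}
    (hS : S.card < hilbert n V m) : ∃ P : MvPolynomial (Fin n) ℂ,
      P.totalDegree ≤ m ∧ (∀ x ∈ S, eval x P = 0) ∧ P ∉ vanishingIdeal n V := by
  let R := restrictTotalDegree (Fin n) ℂ m
  let ev : R →ₗ[ℂ] S → ℂ :=
    (LinearMap.pi fun x : S => (aeval (R := ℂ) x.1).toLinearMap) ∘ₗ R.subtype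
  let mk : R →ₗ[ℂ] CoordinateRing n V :=
    (Ideal.Quotient.mkₐ ℂ (vanishingIdeal n V)).toLinearMap ∘ₗ R.subtype
  have hmk : Module.finrank ℂ mk.range = hilbert n V m := by
    rw [LinearMap.range_comp, Submodule.range_subtype, hilbert]
  have hker : ¬ev.ker ≤ mk.ker := fun hle => by
    have hev := ev.finrank_range_add_finrank_ker
    have hrange := ev.range.finrank_le
    rw [Module.finrank_fintype_fun_eq_card, Fintype.card_coe] at hrange
    have := mk.finrank_range_add_finrank_ker
    have := Submodule.finrank_mono hle
    lia
  obtain ⟨P, hPS, hPV⟩ := SetLike.not_le_iff_exists.1 hker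
  refine ⟨P, (mem_restrictTotalDegree _ _ _).1 P.2, fun x hx => ?_, fun h => hPV ?_⟩
  · exact congrFun (LinearMap.mem_ker.1 hPS) ⟨x, hx⟩
  · exact Ideal.Quotient.eq_zero_iff_mem.2 h

lemma IsAlgebraicSet.exists_totalDegree_le_deltaSet (hV : IsAlgebraicSet n V) :
    ∃ G : Finset (MvPolynomial (Fin n) ℂ), (∀ g ∈ G, g.totalDegree ≤ deltaSet n V) ∧
      ∀ W, IsIrredComponent n W V → IsIrredComponent n W (zeroLocus n ↑G) := by
  refine Nat.sInf_mem (s := {δ | ∃ G : Finset (MvPolynomial (Fin n) ℂ),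
    (∀ g ∈ G, g.totalDegree ≤ δ) ∧
      ∀ W, IsIrredComponent n W V → IsIrredComponent n W (zeroLocus n ↑G)}) ?_
  obtain ⟨G, hG⟩ : (vanishingIdeal n V).FG := IsNoetherian.noetherian _
  refine ⟨G.sup totalDegree, G, fun g hg => Finset.le_sup hg, fun W hW => ?_⟩
  have hzero : zeroLocus n (G : Set (MvPolynomial (Fin n) ℂ)) = V := by
    refine Subset.antisymm ?_ (subset_zeroLocus_iff.2 (hG ▸ Ideal.subset_span))
    rw [← hV.vanishingIdeal_le_iff, ← hG]
    exact Ideal.span_le.2 (subset_zeroLocus_iff.1 subset_rfl)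
  rwa [hzero]

end Siegel

section Rpow

variable {d : ℕ}

lemma lt_mul_floor_rpow_add_one_pow (hd : 1 ≤ d) (N : ℕ) {D : ℕ} (hD : 0 < D) :
    N < D * (⌊((N : ℝ) / D) ^ ((1 : ℝ) / d)⌋₊ + 1) ^ d := by
  have hroot : (((N : ℝ) / D) ^ ((1 : ℝ) / d)) ^ d = N / D := by
    rw [one_div, Real.rpow_inv_natCast_pow (by positivity) (by lia)]
  have hlt := pow_lt_pow_left₀ (Nat.lt_floor_add_one (((N : ℝ) / D) ^ ((1 : ℝ) / d)))
    (by positivity) (by lia : d ≠ 0)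
  rw [hroot, div_lt_iff₀' (by exact_mod_cast hD)] at hlt
  exact_mod_cast hlt

lemma le_rpow_mul_rpow_of_mul_pow_mul_le (hd : 1 ≤ d) {τ x D N : ℝ} (hτ : 0 < τ) (hx : 0 ≤ x)
    (hD : 0 < D) (h : τ * x ^ d * D ≤ N) :
    x ≤ τ⁻¹ ^ ((1 : ℝ) / d) * (N / D) ^ ((1 : ℝ) / d) := by
  have hN : 0 ≤ N := le_trans (by positivity) h
  have hpow : x ^ d ≤ τ⁻¹ * (N / D) := by
    rw [← div_eq_inv_mul, le_div_iff₀ hτ, le_div_iff₀ hD]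
    linarith
  rw [← Real.mul_rpow (by positivity) (by positivity), one_div]
  calc x = (x ^ d) ^ ((d : ℝ)⁻¹) := (Real.pow_rpow_inv_natCast hx (by lia)).symm
    _ ≤ _ := Real.rpow_le_rpow (by positivity) hpow (by positivity)

end Rpow

/-- Lemma 4.4 of the paper: a Siegel-type lemma for a finite set of complex
points and a (not necessarily irreducible) `d`-dimensional algebraic set `V`, with
`|S| ≥ τ δ(V)^d deg V`. -/
theorem statement13 (n d : ℕ) (hd : 1 ≤ d) (τ : ℝ) (hτ : 0 < τ) :
    ∃ C : ℝ, 0 < C ∧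
      ∀ V : Set (Fin n → ℂ), IsAlgSetOfDim n V d →
        ∀ S : Finset (Fin n → ℂ),
          τ * (deltaSet n V : ℝ) ^ d * (degreeSum n V : ℝ) ≤ (S.card : ℝ) →
          ∃ P : MvPolynomial (Fin n) ℂ,
            (P.totalDegree : ℝ) ≤
              C * ((S.card : ℝ) / (degreeSum n V : ℝ)) ^ ((1 : ℝ) / (d : ℝ)) ∧
            (∀ x ∈ S, eval x P = 0) ∧ P ∉ vanishingIdeal n V := by
  refine ⟨n * τ⁻¹ ^ ((1 : ℝ) / d) + d, by positivity, fun V hV S hS => ?_⟩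
  have hdeg := hV.degreeSum_pos hd
  obtain ⟨G, hG, hGV⟩ := hV.1.exists_totalDegree_le_deltaSet
  set X : ℝ := ((S.card : ℝ) / degreeSum n V) ^ ((1 : ℝ) / d)
  have hcard : S.card < hilbert n V (n * deltaSet n V + d * ⌊X⌋₊) :=
    (lt_mul_floor_rpow_add_one_pow hd S.card hdeg).trans_le
      (hV.degreeSum_mul_pow_le_hilbert hd hG hGV ⌊X⌋₊)
  obtain ⟨P, hPdeg, hPS, hPV⟩ := exists_eval_eq_zero_of_card_lt_hilbert hcard
  refine ⟨P, ?_, hPS, hPV⟩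
  have hδ : (deltaSet n V : ℝ) ≤ τ⁻¹ ^ ((1 : ℝ) / d) * X :=
    le_rpow_mul_rpow_of_mul_pow_mul_le hd hτ (by positivity) (by exact_mod_cast hdeg) hS
  calc (P.totalDegree : ℝ) ≤ n * deltaSet n V + d * ⌊X⌋₊ := by exact_mod_cast hPdeg
    _ ≤ n * (τ⁻¹ ^ ((1 : ℝ) / d) * X) + d * X := by
      gcongr
      exact Nat.floor_le (by positivity)
    _ = (n * τ⁻¹ ^ ((1 : ℝ) / d) + d) * X := by ring

end Paper
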